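/- For all m, n ≥ 0 there is a well-defined unital k-algebra homomorphism ι_{m,n} : R(m) ⊗_k R(n) → R(m+n) determined by e(ν) ⊗ e(ν′) ↦ e(ν∗ν′) (concatenation of sequences), x_k ⊗ 1 ↦ x_k, 1 ⊗ x_k ↦ x_{m+k}, τ_l ⊗ 1 ↦ τ_l, and 1 ⊗ τ_l ↦ τ_{m+l}; moreover R(m+n) is free both as a left module and as a right module over R(m) ⊗_k R(n) via ι_{m,n} (in particular ι_{m,n} is injective). -/

import Mathlib

/- ## Scaffold: Khovanov–Lauda–Rouquier algebras -/

open scoped TensorProduct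

/-- A symmetrizable Cartan datum together with the structure constants of the
family of polynomials `Q`. -/
structure CartanDatum (k : Type) [Field k] (I : Type) [Fintype I] [DecidableEq I] : Type where
  a : I → I → ℤ
  d : I → ℤ
  t : I → I → ℕ → ℕ → k
  a_diag : ∀ i, a i i = 2
  a_nonpos : ∀ i j, i ≠ j → a i j ≤ 0
  a_zero_iff : ∀ i j, a i j = 0 ↔ a j i = 0
  d_pos : ∀ i, 0 < d i
  symmetrize : ∀ i j, d i * a i j = d j * a j i
  t_symm : ∀ i j p q, t i j p q = t j i q p
  t_lead : ∀ i j, i ≠ j → t i j (-(a i j)).toNat 0 ≠ 0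

namespace KLR

variable {k : Type} [Field k] {I : Type} [Fintype I] [DecidableEq I]

/-- The symmetric bilinear form `(α_i, α_j) = d_i a_{ij}`. -/
def B (C : CartanDatum k I) (i j : I) : ℤ := C.d i * C.a i j

/-- Generators of the KLR algebra `R(n)`. -/
inductive Gen (I : Type) (n : ℕ) : Type
  | e (ν : Fin n → I) : Gen I n
  | x (a : Fin n) : Gen I n
  | tau (l : ℕ) (h : l + 1 < n) : Gen I n

variable (k) in
/-- The free algebra on the generators. -/
abbrev FA (I : Type) (n : ℕ) : Type := FreeAlgebra k (Gen I n)

variable (k) in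
def ge {n : ℕ} (ν : Fin n → I) : FA k I n := FreeAlgebra.ι k (Gen.e ν)

variable (k) in
def gx {n : ℕ} (a : Fin n) : FA k I n := FreeAlgebra.ι k (Gen.x a)

variable (k) in
def gt {n : ℕ} (l : ℕ) (h : l + 1 < n) : FA k I n := FreeAlgebra.ι k (Gen.tau l h)

/-- The polynomial `Q_{ij}(u,v)` evaluated on two elements of an algebra. -/
def Qel (C : CartanDatum k I) {A : Type} [Ring A] [Algebra k A] (i j : I) (u v : A) : A :=
  if i = j then 0 else
    ∑ p ∈ Finset.range ((-(C.a i j)).toNat + 1), ∑ q ∈ Finset.range ((-(C.a j i)).toNat + 1),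
      if C.d i * (p : ℤ) + C.d j * (q : ℤ) = -(C.d i * C.a i j) then
        C.t i j p q • (u ^ p * v ^ q) else 0

/-- The divided difference `(Q_{ij}(u,v) - Q_{ij}(w,v))/(u - w)` evaluated on elements. -/
def Qdiff (C : CartanDatum k I) {A : Type} [Ring A] [Algebra k A] (i j : I) (u v w : A) : A :=
  if i = j then 0 else
    ∑ p ∈ Finset.range ((-(C.a i j)).toNat + 1), ∑ q ∈ Finset.range ((-(C.a j i)).toNat + 1),
      if C.d i * (p : ℤ) + C.d j * (q : ℤ) = -(C.d i * C.a i j) then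
        C.t i j p q • ((∑ c ∈ Finset.range p, u ^ c * w ^ (p - 1 - c)) * v ^ q) else 0

/-- The defining relations of the KLR algebra `R(n)`. -/
inductive Rel (C : CartanDatum k I) (n : ℕ) : FA k I n → FA k I n → Prop
  | ee : ∀ ν ν' : Fin n → I, Rel C n (ge k ν * ge k ν') (if ν = ν' then ge k ν else 0)
  | esum : Rel C n (∑ ν : Fin n → I, ge k ν) 1
  | xx : ∀ a b : Fin n, Rel C n (gx k a * gx k b) (gx k b * gx k a)
  | xe : ∀ (a : Fin n) (ν : Fin n → I), Rel C n (gx k a * ge k ν) (ge k ν * gx k a)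
  | taue : ∀ (l : ℕ) (h : l + 1 < n) (ν : Fin n → I),
      Rel C n (gt k l h * ge k ν)
        (ge k (ν ∘ Equiv.swap (⟨l, Nat.lt_of_succ_lt h⟩ : Fin n) ⟨l + 1, h⟩) * gt k l h)
  | tautau : ∀ (l : ℕ) (h : l + 1 < n) (l' : ℕ) (h' : l' + 1 < n),
      (l + 1 < l' ∨ l' + 1 < l) →
      Rel C n (gt k l h * gt k l' h') (gt k l' h' * gt k l h)
  | tausq : ∀ (l : ℕ) (h : l + 1 < n) (ν : Fin n → I),
      Rel C n (gt k l h ^ 2 * ge k ν)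
        (Qel C (ν ⟨l, Nat.lt_of_succ_lt h⟩) (ν ⟨l + 1, h⟩)
          (gx k ⟨l, Nat.lt_of_succ_lt h⟩) (gx k ⟨l + 1, h⟩) * ge k ν)
  | taux : ∀ (l : ℕ) (h : l + 1 < n) (m : Fin n) (ν : Fin n → I),
      Rel C n ((gt k l h * gx k m
          - gx k (Equiv.swap (⟨l, Nat.lt_of_succ_lt h⟩ : Fin n) ⟨l + 1, h⟩ m) * gt k l h) * ge k ν)
        (if m = ⟨l, Nat.lt_of_succ_lt h⟩ ∧ ν ⟨l, Nat.lt_of_succ_lt h⟩ = ν ⟨l + 1, h⟩ then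
            -(ge k ν)
          else if m = (⟨l + 1, h⟩ : Fin n) ∧ ν ⟨l, Nat.lt_of_succ_lt h⟩ = ν ⟨l + 1, h⟩ then
            ge k ν
          else 0)
  | braid : ∀ (l : ℕ) (h2 : l + 2 < n) (ν : Fin n → I),
      Rel C n ((gt k (l + 1) h2 * gt k l (Nat.lt_of_succ_lt h2) * gt k (l + 1) h2
          - gt k l (Nat.lt_of_succ_lt h2) * gt k (l + 1) h2 * gt k l (Nat.lt_of_succ_lt h2))
          * ge k ν)
        (if ν ⟨l, Nat.lt_of_succ_lt (Nat.lt_of_succ_lt h2)⟩ = ν ⟨l + 2, h2⟩ then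
            Qdiff C (ν ⟨l, Nat.lt_of_succ_lt (Nat.lt_of_succ_lt h2)⟩)
              (ν ⟨l + 1, Nat.lt_of_succ_lt h2⟩)
              (gx k ⟨l, Nat.lt_of_succ_lt (Nat.lt_of_succ_lt h2)⟩)
              (gx k ⟨l + 1, Nat.lt_of_succ_lt h2⟩)
              (gx k ⟨l + 2, h2⟩) * ge k ν
          else 0)

/-- The Khovanov–Lauda–Rouquier algebra `R(n)`. -/
abbrev Alg (C : CartanDatum k I) (n : ℕ) : Type := RingQuot (Rel C n)

variable (C : CartanDatum k I)

/-- The generator `e(ν)` of `R(n)`. -/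
noncomputable def Ee {n : ℕ} (ν : Fin n → I) : Alg C n :=
  RingQuot.mkAlgHom k (Rel C n) (ge k ν)

/-- The generator `x_a` of `R(n)`. -/
noncomputable def Xx {n : ℕ} (a : Fin n) : Alg C n :=
  RingQuot.mkAlgHom k (Rel C n) (gx k a)

/-- The generator `τ_l` of `R(n)`. -/
noncomputable def Tt {n : ℕ} (l : ℕ) (h : l + 1 < n) : Alg C n :=
  RingQuot.mkAlgHom k (Rel C n) (gt k l h)

variable (I) in
/-- The height of `β = Σ k_i α_i`. -/
def ht (β : I → ℕ) : ℕ := ∑ i, β i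

/-- The content of a sequence `ν`. -/
def content {m : ℕ} (ν : Fin m → I) : I → ℕ :=
  fun i => (Finset.univ.filter (fun a => ν a = i)).card

/-- The set `I^β` of sequences of length `m` with content `β`. -/
def seqs (β : I → ℕ) (m : ℕ) : Finset (Fin m → I) :=
  Finset.univ.filter (fun ν => content ν = β)

/-- The central idempotent `e(β)` in `R(n)`. -/
noncomputable def eIdem (n : ℕ) (β : I → ℕ) : Alg C n := ∑ ν ∈ seqs β n, Ee C ν

/-- `β + α_i`. -/
def addA (β : I → ℕ) (i : I) : I → ℕ := fun j => β j + if j = i then 1 else 0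

/-- The idempotent `e(β, α_i)` of `R(n+1)` (sum over `ν ∈ I^{β+α_i}` with `ν_{n+1} = i`). -/
noncomputable def eR (n : ℕ) (β : I → ℕ) (i : I) : Alg C (n + 1) :=
  ∑ ν ∈ (seqs (addA β i) (n + 1)).filter (fun ν => ν (Fin.last n) = i), Ee C ν

/-- The idempotent `e(α_i, β)` of `R(n+1)` (sum over `ν ∈ I^{β+α_i}` with `ν_1 = i`). -/
noncomputable def eL (n : ℕ) (β : I → ℕ) (i : I) : Alg C (n + 1) :=
  ∑ ν ∈ (seqs (addA β i) (n + 1)).filter (fun ν => ν 0 = i), Ee C ν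

/-- The idempotent `e(β - α_i, α_i)` of `R(n)`: sum over `ν ∈ I^β` with last entry `i`;
this is `0` when the coefficient of `α_i` in `β` is `0` or `n = 0`. -/
noncomputable def eD (n : ℕ) (β : I → ℕ) (i : I) : Alg C n :=
  ∑ ν ∈ (seqs β n).filter (fun ν => if h : 0 < n then ν ⟨n - 1, Nat.sub_lt h one_pos⟩ = i
      else False), Ee C ν

/-- The relation collapsing `R(n)` to `R(β) = R(n)e(β)` (a unital ring with unit `e(β)`). -/
inductive URel (n : ℕ) (β : I → ℕ) : Alg C n → Alg C n → Prop
  | unit : URel n β (eIdem C n β) 1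

/-- The algebra `R(β)`, realized as the quotient of `R(n)` identifying `e(β)` with `1`. -/
abbrev bAlg (n : ℕ) (β : I → ℕ) : Type := RingQuot (URel C n β)

/-- The canonical projection `R(n) → R(β)`. -/
noncomputable def toB {n : ℕ} {β : I → ℕ} : Alg C n →ₐ[k] bAlg C n β :=
  RingQuot.mkAlgHom k (URel C n β)

/-- The element `a^Λ(x_1)` of `R(β)`. -/
noncomputable def aLam (Λ : I → ℕ) (n : ℕ) (β : I → ℕ) : bAlg C n β :=
  if h : 0 < n then
    ∑ ν ∈ seqs β n, (toB C (Xx C ⟨0, h⟩)) ^ (Λ (ν ⟨0, h⟩)) * toB C (Ee C ν)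
  else 0

/-- The cyclotomic relation. -/
inductive CRel (Λ : I → ℕ) (n : ℕ) (β : I → ℕ) : bAlg C n β → bAlg C n β → Prop
  | cyc : CRel Λ n β (aLam C Λ n β) 0

/-- The cyclotomic KLR algebra `R^Λ(β)`. -/
abbrev cAlg (Λ : I → ℕ) (n : ℕ) (β : I → ℕ) : Type := RingQuot (CRel C Λ n β)

/-- The canonical projection `R(β) → R^Λ(β)`. -/
noncomputable def toC {Λ : I → ℕ} {n : ℕ} {β : I → ℕ} : bAlg C n β →ₐ[k] cAlg C Λ n β :=
  RingQuot.mkAlgHom k (CRel C Λ n β)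

/-- The canonical projection `R(n) → R^Λ(β)`. -/
noncomputable def toCB (Λ : I → ℕ) {n : ℕ} {β : I → ℕ} : Alg C n →ₐ[k] cAlg C Λ n β :=
  (toC C).comp (toB C)

end KLR
namespace KLR

variable {k : Type} [Field k] {I : Type} [Fintype I] [DecidableEq I] (C : CartanDatum k I)

section Homs

/-- Characterization of the non-unital algebra homomorphism `R(n) → R(n+1)` adding `i`
on the right: `e(ν) ↦ e(ν∗(i))`, `x_a ↦ x_a e(…,α_i)`, `τ_l ↦ τ_l e(…,α_i)`,
where the relevant idempotent is supplied as `e`. -/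
def IsUpR {n : ℕ} (i : I) (e : Alg C (n + 1)) (φ : Alg C n →ₙₐ[k] Alg C (n + 1)) : Prop :=
  (∀ ν : Fin n → I, φ (Ee C ν) = Ee C (Fin.snoc ν i)) ∧
  (∀ a : Fin n, φ (Xx C a) = Xx C a.castSucc * e) ∧
  (∀ (l : ℕ) (h : l + 1 < n), φ (Tt C l h) = Tt C l (Nat.lt_succ_of_lt h) * e)

/-- Characterization of the non-unital algebra homomorphism `R(n) → R(n+1)` adding `i`
on the left: `e(ν) ↦ e((i)∗ν)`, `x_a ↦ x_{a+1} e(α_i,…)`, `τ_l ↦ τ_{l+1} e(α_i,…)`. -/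
def IsUpL {n : ℕ} (i : I) (e : Alg C (n + 1)) (φ : Alg C n →ₙₐ[k] Alg C (n + 1)) : Prop :=
  (∀ ν : Fin n → I, φ (Ee C ν) = Ee C (Fin.cons i ν)) ∧
  (∀ a : Fin n, φ (Xx C a) = Xx C a.succ * e) ∧
  (∀ (l : ℕ) (h : l + 1 < n), φ (Tt C l h) = Tt C (l + 1) (Nat.succ_lt_succ h) * e)

/-- Characterization of the non-unital homomorphism `R(β) → R(β+α_i)` (right version). -/
def IsUpRb {n : ℕ} {β γ' : I → ℕ} (i : I)
    (φ : bAlg C n β →ₙₐ[k] bAlg C (n + 1) γ') : Prop :=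
  (∀ ν : Fin n → I, φ (toB C (Ee C ν)) = toB C (Ee C (Fin.snoc ν i))) ∧
  (∀ a : Fin n, φ (toB C (Xx C a)) = toB C (Xx C a.castSucc * eR C n β i)) ∧
  (∀ (l : ℕ) (h : l + 1 < n),
    φ (toB C (Tt C l h)) = toB C (Tt C l (Nat.lt_succ_of_lt h) * eR C n β i))

/-- Characterization of the non-unital homomorphism `R(β) → R(β+α_i)` (left version). -/
def IsUpLb {n : ℕ} {β γ' : I → ℕ} (i : I)
    (φ : bAlg C n β →ₙₐ[k] bAlg C (n + 1) γ') : Prop :=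
  (∀ ν : Fin n → I, φ (toB C (Ee C ν)) = toB C (Ee C (Fin.cons i ν))) ∧
  (∀ a : Fin n, φ (toB C (Xx C a)) = toB C (Xx C a.succ * eL C n β i)) ∧
  (∀ (l : ℕ) (h : l + 1 < n),
    φ (toB C (Tt C l h)) = toB C (Tt C (l + 1) (Nat.succ_lt_succ h) * eL C n β i))

/-- Characterization of the non-unital homomorphism `R^Λ(β) → R^Λ(β+α_i)` (right version). -/
def IsUpRc (Λ : I → ℕ) {n : ℕ} {β γ' : I → ℕ} (i : I)
    (φ : cAlg C Λ n β →ₙₐ[k] cAlg C Λ (n + 1) γ') : Prop :=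
  (∀ ν : Fin n → I, φ (toCB C Λ (Ee C ν)) = toCB C Λ (Ee C (Fin.snoc ν i))) ∧
  (∀ a : Fin n, φ (toCB C Λ (Xx C a)) = toCB C Λ (Xx C a.castSucc * eR C n β i)) ∧
  (∀ (l : ℕ) (h : l + 1 < n),
    φ (toCB C Λ (Tt C l h)) = toCB C Λ (Tt C l (Nat.lt_succ_of_lt h) * eR C n β i))

end Homs

section Tensor

open scoped TensorProduct

variable (S B M : Type) [Ring S] [Algebra k S] [Ring B] [Algebra k B]
  [AddCommGroup M] [Module k M] [Module S M] [IsScalarTower k S M]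

variable (k) in
/-- The relation submodule defining the balanced tensor product `B ⊗_S M` where `S`
acts on `B` on the right through the (non-unital) homomorphism `φ : S → B`. -/
def TRel (φ : S →ₙₐ[k] B) : Submodule B (B ⊗[k] M) :=
  Submodule.span B {z | ∃ (b : B) (r : S) (m : M), z = (b * φ r) ⊗ₜ[k] m - b ⊗ₜ[k] (r • m)}

variable (k) in
/-- The balanced tensor product `B ⊗_S M` (over the homomorphism `φ : S → B`). -/
abbrev OT (φ : S →ₙₐ[k] B) : Type := (B ⊗[k] M) ⧸ TRel k S B M φ

variable (k) in
/-- The canonical projection onto the balanced tensor product. -/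
def OTmk (φ : S →ₙₐ[k] B) (z : B ⊗[k] M) : OT k S B M φ := Submodule.Quotient.mk z

end Tensor

section ESub

variable (A : Type) [Ring A] [Algebra k A] (N : Type) [AddCommGroup N] [Module k N]
  [Module A N] [IsScalarTower k A N]

variable (k) in
/-- Multiplication by `e` as a `k`-linear endomorphism of an `A`-module. -/
def eMap (e : A) : N →ₗ[k] N where
  toFun x := e • x
  map_add' x y := smul_add e x y
  map_smul' c x := by
    simp only [RingHom.id_apply]
    rw [← algebraMap_smul A c x, ← mul_smul, ← Algebra.commutes, mul_smul, algebraMap_smul]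

variable (k) in
/-- The `k`-submodule `eN` of an `A`-module `N`. -/
def eSub (e : A) : Submodule k N := LinearMap.range (eMap k A N e)

end ESub

section Grading

variable {A M : Type}

variable (k) in
/-- `𝒜` is an algebra grading of `A`. -/
def IsAlgGrading [Ring A] [Algebra k A] (𝒜 : ℤ → Submodule k A) : Prop :=
  (1 : A) ∈ 𝒜 0 ∧ (∀ {c₁ c₂ : ℤ} {a b : A}, a ∈ 𝒜 c₁ → b ∈ 𝒜 c₂ → a * b ∈ 𝒜 (c₁ + c₂)) ∧
    DirectSum.IsInternal 𝒜

variable (k) in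
/-- `gr` is a grading of the `A`-module `M` compatible with the algebra grading `𝒜`. -/
def IsModGrading [Ring A] [Algebra k A] [AddCommGroup M] [Module k M] [Module A M]
    (𝒜 : ℤ → Submodule k A) (gr : ℤ → Submodule k M) : Prop :=
  DirectSum.IsInternal gr ∧
    ∀ {c m : ℤ} {a : A} {x : M}, a ∈ 𝒜 c → x ∈ gr m → a • x ∈ gr (c + m)

end Grading

section KLRGrading

/-- The canonical grading property for `R(n)`-type quotients: images of `e(ν)` have degree 0,
`x_a e(ν)` has degree `(α_{ν_a}, α_{ν_a})`, and `τ_l e(ν)` has degree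
`-(α_{ν_l}, α_{ν_{l+1}})`.  Here `p : R(n) → A` is the canonical projection onto the
quotient under consideration. -/
def IsKLRGrading {n : ℕ} {A : Type} [Ring A] [Algebra k A] (p : Alg C n →ₐ[k] A)
    (𝒜 : ℤ → Submodule k A) : Prop :=
  IsAlgGrading k 𝒜 ∧
  (∀ ν : Fin n → I, p (Ee C ν) ∈ 𝒜 0) ∧
  (∀ (a : Fin n) (ν : Fin n → I), p (Xx C a * Ee C ν) ∈ 𝒜 (B C (ν a) (ν a))) ∧
  (∀ (l : ℕ) (h : l + 1 < n) (ν : Fin n → I),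
    p (Tt C l h * Ee C ν) ∈ 𝒜 (-(B C (ν ⟨l, Nat.lt_of_succ_lt h⟩) (ν ⟨l + 1, h⟩))))

end KLRGrading

end KLR
namespace KLR

open scoped TensorProduct

variable {k : Type} [Field k] {I : Type} [Fintype I] [DecidableEq I] (C : CartanDatum k I)

section IndGrading

variable (S B M : Type) [Ring S] [Algebra k S] [Ring B] [Algebra k B]
  [AddCommGroup M] [Module k M] [Module S M] [IsScalarTower k S M]

variable (k) in
/-- The induced grading on the balanced tensor product `B ⊗_S M`. -/
def otGr (φ : S →ₙₐ[k] B) (𝒜 : ℤ → Submodule k B) (gr : ℤ → Submodule k M)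
    (c : ℤ) : Submodule k (OT k S B M φ) :=
  Submodule.span k {z | ∃ (c₁ c₂ : ℤ) (b : B) (m : M),
    c₁ + c₂ = c ∧ b ∈ 𝒜 c₁ ∧ m ∈ gr c₂ ∧ z = OTmk k S B M φ (b ⊗ₜ[k] m)}

end IndGrading

section ESubGrading

variable (A N : Type) [Ring A] [Algebra k A] [AddCommGroup N] [Module k N]
  [Module A N] [IsScalarTower k A N]

variable (k) in
/-- The induced grading on the submodule `eN ⊆ N`. -/
def eSubGr (e : A) (gr : ℤ → Submodule k N) (c : ℤ) : Submodule k ↥(eSub k A N e) :=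
  (gr c).comap (eSub k A N e).subtype

end ESubGrading

section Instances

variable (n : ℕ) (β : I → ℕ) (Λ : I → ℕ)

noncomputable instance : Module (bAlg C n β) (cAlg C Λ n β) :=
  Module.compHom _ (toC C (Λ := Λ) (n := n) (β := β)).toRingHom

instance : IsScalarTower k (bAlg C n β) (cAlg C Λ n β) := by
  constructor
  intro c s m
  show (toC C (c • s)) * m = c • (toC C s * m)
  rw [map_smul, Algebra.smul_mul_assoc]

end Instances


end KLR
namespace KLR

open scoped TensorProduct

variable {k : Type} [Field k] {I : Type} [Fintype I] [DecidableEq I] (C : CartanDatum k I)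

/-- `⟨h_i, β⟩ = Σ_j k_j a_{ij}`. -/
def pairH (i : I) (β : I → ℕ) : ℤ := ∑ j, (β j : ℤ) * C.a i j

/-- `(α_i, β) = Σ_j k_j (α_i, α_j)`. -/
def pairB (i : I) (β : I → ℕ) : ℤ := ∑ j, (β j : ℤ) * B C i j

/-- The ordered product `τ_1 τ_2 ⋯ τ_n` in `R(β+α_i)`-type quotients. -/
noncomputable def tauProd (n : ℕ) (γ : I → ℕ) : bAlg C (n + 1) γ :=
  (List.ofFn (fun l : Fin n => toB C (Tt C l.val (Nat.succ_lt_succ l.isLt)))).prod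

/-- The right ideal `Ae` as a `k`-submodule. -/
noncomputable def rId {A : Type} [Ring A] [Algebra k A] (e : A) : Submodule k A :=
  LinearMap.range (LinearMap.mulRight k e)

/-- The left ideal `eA` as a `k`-submodule. -/
noncomputable def lId {A : Type} [Ring A] [Algebra k A] (e : A) : Submodule k A :=
  LinearMap.range (LinearMap.mulLeft k e)

variable (k) in
/-- Characterization of the module structure on `eN` over `S'` acting through
the (non-unital) homomorphism `φ : S' → A`. -/
def IsEAction {A N S' : Type} [Ring A] [Algebra k A] [AddCommGroup N] [Module k N]
    [Module A N] [IsScalarTower k A N] [Ring S'] [Algebra k S']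
    (e : A) (φ : S' →ₙₐ[k] A) (inst : Module S' ↥(eSub k A N e)) : Prop :=
  letI := inst
  ∀ (r : S') (x : ↥(eSub k A N e)), ((r • x : ↥(eSub k A N e)) : N) = φ r • (x : N)

end KLR



namespace KLR

open scoped TensorProduct

section Data

variable {k : Type} [Field k] {I : Type} [Fintype I] [DecidableEq I] (C : CartanDatum k I)

/-- Elements of an algebra satisfying the defining relations of `R(N)`. -/
structure KData (N : ℕ) (A : Type) [Ring A] [Algebra k A] where
  e : (Fin N → I) → A
  x : Fin N → A
  t : ∀ l : ℕ, l + 1 < N → A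
  ee : ∀ ν ν' : Fin N → I, e ν * e ν' = if ν = ν' then e ν else 0
  esum : ∑ ν : Fin N → I, e ν = 1
  xx : ∀ a b : Fin N, x a * x b = x b * x a
  xe : ∀ (a : Fin N) (ν : Fin N → I), x a * e ν = e ν * x a
  taue : ∀ (l : ℕ) (h : l + 1 < N) (ν : Fin N → I),
      t l h * e ν =
        e (ν ∘ Equiv.swap (⟨l, Nat.lt_of_succ_lt h⟩ : Fin N) ⟨l + 1, h⟩) * t l h
  tautau : ∀ (l : ℕ) (h : l + 1 < N) (l' : ℕ) (h' : l' + 1 < N),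
      (l + 1 < l' ∨ l' + 1 < l) → t l h * t l' h' = t l' h' * t l h
  tausq : ∀ (l : ℕ) (h : l + 1 < N) (ν : Fin N → I),
      t l h ^ 2 * e ν =
        Qel C (ν ⟨l, Nat.lt_of_succ_lt h⟩) (ν ⟨l + 1, h⟩)
          (x ⟨l, Nat.lt_of_succ_lt h⟩) (x ⟨l + 1, h⟩) * e ν
  taux : ∀ (l : ℕ) (h : l + 1 < N) (m : Fin N) (ν : Fin N → I),
      (t l h * x m
          - x (Equiv.swap (⟨l, Nat.lt_of_succ_lt h⟩ : Fin N) ⟨l + 1, h⟩ m) * t l h) * e ν =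
        (if m = ⟨l, Nat.lt_of_succ_lt h⟩ ∧ ν ⟨l, Nat.lt_of_succ_lt h⟩ = ν ⟨l + 1, h⟩ then
            -(e ν)
          else if m = (⟨l + 1, h⟩ : Fin N) ∧ ν ⟨l, Nat.lt_of_succ_lt h⟩ = ν ⟨l + 1, h⟩ then
            e ν
          else 0)
  braid : ∀ (l : ℕ) (h2 : l + 2 < N) (ν : Fin N → I),
      (t (l + 1) h2 * t l (Nat.lt_of_succ_lt h2) * t (l + 1) h2
          - t l (Nat.lt_of_succ_lt h2) * t (l + 1) h2 * t l (Nat.lt_of_succ_lt h2)) * e ν =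
        (if ν ⟨l, Nat.lt_of_succ_lt (Nat.lt_of_succ_lt h2)⟩ = ν ⟨l + 2, h2⟩ then
            Qdiff C (ν ⟨l, Nat.lt_of_succ_lt (Nat.lt_of_succ_lt h2)⟩)
              (ν ⟨l + 1, Nat.lt_of_succ_lt h2⟩)
              (x ⟨l, Nat.lt_of_succ_lt (Nat.lt_of_succ_lt h2)⟩)
              (x ⟨l + 1, Nat.lt_of_succ_lt h2⟩)
              (x ⟨l + 2, h2⟩) * e ν
          else 0)

theorem map_Qel {A B : Type} [Ring A] [Algebra k A] [Ring B] [Algebra k B] (φ : A →ₐ[k] B)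
    (i j : I) (u v : A) : φ (Qel C i j u v) = Qel C i j (φ u) (φ v) := by
  unfold Qel
  split_ifs
  · simp
  · simp only [map_sum, apply_ite φ, map_smul, map_mul, map_pow, map_zero]

theorem map_Qdiff {A B : Type} [Ring A] [Algebra k A] [Ring B] [Algebra k B] (φ : A →ₐ[k] B)
    (i j : I) (u v w : A) : φ (Qdiff C i j u v w) = Qdiff C i j (φ u) (φ v) (φ w) := by
  unfold Qdiff
  split_ifs
  · simp
  · simp only [map_sum, apply_ite φ, map_smul, map_mul, map_pow, map_zero]

/-- The free-algebra map attached to a family of elements. -/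
noncomputable def KData.pre {N : ℕ} {A : Type} [Ring A] [Algebra k A] (D : KData C N A) :
    FA k I N →ₐ[k] A :=
  FreeAlgebra.lift k (fun g => match g with
    | Gen.e ν => D.e ν
    | Gen.x a => D.x a
    | Gen.tau l h => D.t l h)

section
variable {N : ℕ} {A : Type} [Ring A] [Algebra k A] (D : KData C N A)

theorem KData.pre_e (ν) : D.pre C (ge k ν) = D.e ν := by simp [KData.pre, ge]
theorem KData.pre_x (a) : D.pre C (gx k a) = D.x a := by simp [KData.pre, gx]
theorem KData.pre_t (l h) : D.pre C (gt k l h) = D.t l h := by simp [KData.pre, gt]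

/-- The algebra map attached to a family of elements satisfying the relations. -/
noncomputable def KData.lift : Alg C N →ₐ[k] A :=
  RingQuot.liftAlgHom k ⟨D.pre C, by
    intro a b h
    induction h with
    | ee ν ν' => simp only [map_mul, apply_ite (D.pre C), map_zero, D.pre_e, D.ee]
    | esum => simp only [map_sum, D.pre_e, D.esum, map_one]
    | xx a b => simp only [map_mul, D.pre_x]; exact D.xx a b
    | xe a ν => simp only [map_mul, D.pre_x, D.pre_e, D.xe]
    | taue l h ν => simp only [map_mul, D.pre_t, D.pre_e, D.taue]
    | tautau l h l' h' hh => simp only [map_mul, D.pre_t]; exact D.tautau l h l' h' hh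
    | tausq l h ν => 
      simp only [map_mul, map_pow, map_Qel, D.pre_t, D.pre_e, D.pre_x]; exact D.tausq l h ν
    | taux l h m ν =>
      simp only [map_mul, map_sub, map_neg, map_zero, apply_ite (D.pre C), D.pre_t, D.pre_e,
        D.pre_x]
      exact D.taux l h m ν
    | braid l h ν =>
      simp only [map_mul, map_sub, map_neg, map_zero, apply_ite (D.pre C), D.pre_t, D.pre_e,
        D.pre_x, map_Qdiff]
      exact D.braid l h ν⟩

theorem KData.lift_e (ν) : D.lift C (Ee C ν) = D.e ν := by
  simp [KData.lift, Ee, D.pre_e]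
theorem KData.lift_x (a) : D.lift C (Xx C a) = D.x a := by
  simp [KData.lift, Xx, D.pre_x]
theorem KData.lift_t (l h) : D.lift C (Tt C l h) = D.t l h := by
  simp [KData.lift, Tt, D.pre_t]

end

/-- The tautological family of generators of `R(N)`. -/
noncomputable def algData (N : ℕ) : KData C N (Alg C N) where
  e := Ee C
  x := Xx C
  t := Tt C
  ee ν ν' := by
    have := RingQuot.mkAlgHom_rel k (Rel.ee (C := C) ν ν')
    simp only [map_mul, apply_ite (RingQuot.mkAlgHom k (Rel C N)), map_zero] at this
    exact this
  esum := by
    have := RingQuot.mkAlgHom_rel k (Rel.esum (C := C) (n := N))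
    simp only [map_sum, map_one] at this
    exact this
  xx a b := by
    have := RingQuot.mkAlgHom_rel k (Rel.xx (C := C) a b)
    simp only [map_mul] at this
    exact this
  xe a b := by
    have := RingQuot.mkAlgHom_rel k (Rel.xe (C := C) a b)
    simp only [map_mul] at this
    exact this
  taue l h ν := by
    have := RingQuot.mkAlgHom_rel k (Rel.taue (C := C) l h ν)
    simp only [map_mul] at this
    exact this
  tautau l h l' h' hh := by
    have := RingQuot.mkAlgHom_rel k (Rel.tautau (C := C) l h l' h' hh)
    simp only [map_mul] at this
    exact this
  tausq l h ν := by
    have := RingQuot.mkAlgHom_rel k (Rel.tausq (C := C) l h ν)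
    simp only [map_mul, map_pow, map_Qel] at this
    exact this
  taux l h m ν := by
    have := RingQuot.mkAlgHom_rel k (Rel.taux (C := C) l h m ν)
    simp only [map_mul, map_sub, map_neg, map_zero,
      apply_ite (RingQuot.mkAlgHom k (Rel C N))] at this
    exact this
  braid l h ν := by
    have := RingQuot.mkAlgHom_rel k (Rel.braid (C := C) l h ν)
    simp only [map_mul, map_sub, map_neg, map_zero, map_Qdiff,
      apply_ite (RingQuot.mkAlgHom k (Rel C N))] at this
    exact this

theorem alg_top {N : ℕ} (S : Subalgebra k (Alg C N)) (he : ∀ ν, Ee C ν ∈ S)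
    (hx : ∀ a, Xx C a ∈ S) (ht : ∀ l h, Tt C l h ∈ S) : ∀ r, r ∈ S := by
  intro r
  obtain ⟨f, rfl⟩ := RingQuot.mkAlgHom_surjective k (Rel C N) r
  have : (⊤ : Subalgebra k (FA k I N)) ≤ S.comap (RingQuot.mkAlgHom k (Rel C N)) := by
    rw [← FreeAlgebra.adjoin_range_ι, Algebra.adjoin_le_iff]
    rintro _ ⟨g, rfl⟩
    cases g with
    | e ν => exact he ν
    | x a => exact hx a
    | tau l h => exact ht l h
  exact this (Algebra.mem_top : f ∈ _)

end Data

end KLR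


namespace KLR

open scoped TensorProduct

section Block

variable {k : Type} [Field k] {I : Type} [Fintype I] [DecidableEq I] {C : CartanDatum k I}
variable {N : ℕ} {A : Type} [Ring A] [Algebra k A] (D : KData C N A)


theorem KData.ext_e {a b : A} (h : ∀ κ, a * D.e κ = b * D.e κ) : a = b := by
  rw [← mul_one a, ← mul_one b, ← D.esum, Finset.mul_sum, Finset.mul_sum]
  exact Finset.sum_congr rfl fun κ _ => h κ

/-- The inclusion of a block of consecutive positions. -/
def off (o m : ℕ) (hN : o + m ≤ N) (a : Fin m) : Fin N := ⟨o + a.val, by omega⟩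

theorem off_inj (o m : ℕ) (hN : o + m ≤ N) : Function.Injective (off o m hN) := by
  intro a b h
  simp only [off, Fin.mk.injEq] at h
  exact Fin.ext (by omega)

theorem off_swap (o m : ℕ) (hN : o + m ≤ N) (l : ℕ) (h : l + 1 < m) (a : Fin m) :
    off o m hN (Equiv.swap (⟨l, Nat.lt_of_succ_lt h⟩ : Fin m) ⟨l + 1, h⟩ a) =
      Equiv.swap (⟨o + l, by omega⟩ : Fin N) ⟨o + l + 1, by omega⟩ (off o m hN a) := by
  have := (off_inj (N := N) o m hN).swap_apply ⟨l, Nat.lt_of_succ_lt h⟩ ⟨l + 1, h⟩ a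
  rw [← this]
  rfl

theorem off_swap_out (o m : ℕ) (hN : o + m ≤ N) (l : ℕ) (h : l + 1 < N)
    (hl : l + 1 < o ∨ o + m ≤ l) (a : Fin m) :
    Equiv.swap (⟨l, Nat.lt_of_succ_lt h⟩ : Fin N) ⟨l + 1, h⟩ (off o m hN a) = off o m hN a := by
  apply Equiv.swap_apply_of_ne_of_ne <;> simp only [off, ne_eq, Fin.mk.injEq] <;> omega

/-- The idempotent of a block. -/
noncomputable def KData.eb (o m : ℕ) (hN : o + m ≤ N) (ν : Fin m → I) : A :=
  ∑ κ : Fin N → I, if κ ∘ off o m hN = ν then D.e κ else 0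

theorem KData.eb_mul (o m : ℕ) (hN : o + m ≤ N) (ν : Fin m → I) (κ) :
    D.eb o m hN ν * D.e κ = if κ ∘ off o m hN = ν then D.e κ else 0 := by
  simp only [KData.eb, Finset.sum_mul, ite_mul, zero_mul, D.ee]
  rw [Finset.sum_eq_single κ]
  · simp
  · intro b _ hb; simp [hb]
  · simp

theorem KData.mul_eb (o m : ℕ) (hN : o + m ≤ N) (ν : Fin m → I) (κ) :
    D.e κ * D.eb o m hN ν = if κ ∘ off o m hN = ν then D.e κ else 0 := by
  simp only [KData.eb, Finset.mul_sum, mul_ite, mul_zero, D.ee]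
  rw [Finset.sum_eq_single κ]
  · simp
  · intro b _ hb; simp [Ne.symm hb]
  · simp

theorem KData.eb_rel (o m : ℕ) (hN : o + m ≤ N) (ν : Fin m → I) {a b : A}
    (h : ∀ κ, κ ∘ off o m hN = ν → a * D.e κ = b * D.e κ) :
    a * D.eb o m hN ν = b * D.eb o m hN ν := by
  apply D.ext_e
  intro κ
  rw [mul_assoc, mul_assoc, D.eb_mul]
  split_ifs with hh
  · exact h κ hh
  · simp

/-- The restriction of a family of generators to a block of positions. -/
noncomputable def KData.block (o m : ℕ) (hN : o + m ≤ N) : KData C m A where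
  e := D.eb o m hN
  x a := D.x (off o m hN a)
  t l h := D.t (o + l) (by omega)
  ee ν ν' := by
    apply D.ext_e
    intro κ
    rw [mul_assoc, D.eb_mul]
    by_cases h : ν = ν'
    · subst h
      simp only [if_true, D.eb_mul]
      split_ifs with h1
      · rw [D.eb_mul, if_pos h1]
      · simp
    · simp only [h, if_false]
      split_ifs with h1
      · rw [D.eb_mul, if_neg (by rintro rfl; exact h h1)]; simp
      · simp
  esum := by
    simp only [KData.eb]
    rw [Finset.sum_comm, ← D.esum]
    apply Finset.sum_congr rfl
    intro κ _
    simp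
  xx a b := D.xx _ _
  xe a ν := by
    apply D.ext_e
    intro κ
    rw [mul_assoc, mul_assoc, D.eb_mul, D.xe, ← mul_assoc, D.eb_mul]
    split_ifs
    · rw [D.xe]
    · simp
  taue l h ν := by
    apply D.ext_e
    intro κ
    rw [mul_assoc, mul_assoc, D.eb_mul, D.taue, ← mul_assoc, D.eb_mul]
    have key : ((κ ∘ Equiv.swap (⟨o + l, by omega⟩ : Fin N) ⟨o + l + 1, by omega⟩) ∘ off o m hN =
        ν ∘ Equiv.swap (⟨l, Nat.lt_of_succ_lt h⟩ : Fin m) ⟨l + 1, h⟩) ↔ κ ∘ off o m hN = ν := by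
      constructor
      · intro hh
        funext a
        have := congrFun hh (Equiv.swap (⟨l, Nat.lt_of_succ_lt h⟩ : Fin m) ⟨l + 1, h⟩ a)
        simpa [off_swap] using this
      · intro hh
        funext a
        subst hh
        simp [off_swap]
    simp only [key]
    split_ifs
    · rw [D.taue]
    · simp
  tautau l h l' h' hh := D.tautau _ _ _ _ (by omega)
  tausq l h ν := by
    apply D.eb_rel
    rintro κ rfl
    exact D.tausq _ _ κ
  taux l h a ν := by
    have h1 : ∀ (P Q : Prop) [Decidable P] [Decidable Q] (e : A),
      (if P then -e else if Q then e else 0) = (if P then -1 else if Q then 1 else 0) * e := by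
      intros; split_ifs <;> simp
    rw [h1]
    apply D.eb_rel
    rintro κ rfl
    rw [← h1, off_swap]
    have := D.taux (o + l) (by omega) (off o m hN a) κ
    rw [this]
    have e1 : ∀ (b : Fin m) (j : ℕ) (hj : o + j < N) (hj' : j < m),
        (off o m hN b = ⟨o + j, hj⟩) = (b = ⟨j, hj'⟩) := by
      intro b j hj hj'
      simp [off, Fin.ext_iff]
    have e2 := e1 a l (by omega) (by omega)
    have e3 := e1 a (l + 1) (by omega) (by omega)
    simp only [← add_assoc] at e3
    simp only [e2, e3]
    rfl
  braid l h ν := by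
    have h1 : ∀ (P : Prop) [Decidable P] (q e : A),
      (if P then q * e else 0) = (if P then q else 0) * e := by
      intros; split_ifs <;> simp
    rw [h1]
    apply D.eb_rel
    rintro κ rfl
    rw [← h1]
    exact D.braid (o + l) (by omega) κ

/-- generator-level commutation criterion -/
theorem comm_of_gens {m : ℕ} {A : Type} [Ring A] [Algebra k A] (φ : Alg C m →ₐ[k] A) (z : A)
    (he : ∀ ν, Commute (φ (Ee C ν)) z) (hx : ∀ a, Commute (φ (Xx C a)) z)
    (ht : ∀ l h, Commute (φ (Tt C l h)) z) (r : Alg C m) : Commute (φ r) z := by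
  have := alg_top C ((Subalgebra.centralizer k {z}).comap φ) (N := m)
    (fun ν => by
      simp only [Subalgebra.mem_comap, Subalgebra.mem_centralizer_iff, Set.mem_singleton_iff,
        forall_eq]; exact (he ν).eq.symm)
    (fun ν => by
      simp only [Subalgebra.mem_comap, Subalgebra.mem_centralizer_iff, Set.mem_singleton_iff,
        forall_eq]; exact (hx ν).eq.symm)
    (fun l h => by
      simp only [Subalgebra.mem_comap, Subalgebra.mem_centralizer_iff, Set.mem_singleton_iff,
        forall_eq]; exact (ht l h).eq.symm) r
  simp only [Subalgebra.mem_comap, Subalgebra.mem_centralizer_iff, Set.mem_singleton_iff,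
        forall_eq] at this
  exact this.symm

theorem KData.eb_comm_t (o m : ℕ) (hN : o + m ≤ N) (ν : Fin m → I) (l : ℕ) (h : l + 1 < N)
    (hl : l + 1 < o ∨ o + m ≤ l) : Commute (D.eb o m hN ν) (D.t l h) := by
  apply D.ext_e
  intro κ
  rw [mul_assoc, mul_assoc, D.eb_mul, D.taue, ← mul_assoc, D.eb_mul]
  have key : (κ ∘ Equiv.swap (⟨l, by omega⟩ : Fin N) ⟨l + 1, by omega⟩) ∘ off o m hN =
      κ ∘ off o m hN := by
    funext a
    simp [off_swap_out o m hN l h hl]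
  simp only [key]
  split_ifs
  · rw [D.taue]
  · simp

theorem KData.eb_comm_x (o m : ℕ) (hN : o + m ≤ N) (ν : Fin m → I) (a : Fin N) :
    Commute (D.eb o m hN ν) (D.x a) := by
  apply D.ext_e
  intro κ
  rw [mul_assoc, mul_assoc, D.eb_mul, D.xe, ← mul_assoc, D.eb_mul]
  split_ifs
  · rw [D.xe]
  · simp

theorem KData.eb_comm_eb (o m : ℕ) (hN : o + m ≤ N) (ν : Fin m → I)
    (o' m' : ℕ) (hN' : o' + m' ≤ N) (ν' : Fin m' → I) :
    Commute (D.eb o m hN ν) (D.eb o' m' hN' ν') := by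
  apply D.ext_e
  intro κ
  rw [mul_assoc, mul_assoc, D.eb_mul, D.eb_mul]
  split_ifs <;> simp_all [D.eb_mul]

theorem KData.x_comm_t (l : ℕ) (h : l + 1 < N) (a : Fin N) (ha : a.val ≠ l) (ha' : a.val ≠ l + 1) :
    Commute (D.x a) (D.t l h) := by
  apply D.ext_e
  intro κ
  have := D.taux l h a κ
  have n1 : ¬ a = (⟨l, by omega⟩ : Fin N) := by simpa [Fin.ext_iff] using ha
  have n2 : ¬ a = (⟨l + 1, h⟩ : Fin N) := by simpa [Fin.ext_iff] using ha'
  rw [Equiv.swap_apply_of_ne_of_ne n1 n2] at this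
  simp only [n1, n2, false_and, if_false, sub_mul] at this
  exact (sub_eq_zero.1 this).symm

variable (C) in
/-- The two block embeddings. -/
noncomputable def iL (m n : ℕ) : Alg C m →ₐ[k] Alg C (m + n) :=
  ((algData C (m + n)).block 0 m (by omega)).lift C

variable (C) in
/-- The second block embedding. -/
noncomputable def iR (m n : ℕ) : Alg C n →ₐ[k] Alg C (m + n) :=
  ((algData C (m + n)).block m n (by omega)).lift C

theorem Tt_congr {N l l' : ℕ} (h : l + 1 < N) (e : l = l') : Tt C l h = Tt C l' (e ▸ h) := by
  subst e; rfl

theorem iL_x (m n : ℕ) (a) : iL C m n (Xx C a) = Xx C (Fin.castAdd n a) := by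
  rw [iL, KData.lift_x]
  change Xx C _ = _
  congr 1
  simp [off, Fin.ext_iff]

theorem iR_x (m n : ℕ) (a) : iR C m n (Xx C a) = Xx C (Fin.natAdd m a) := by
  rw [iR, KData.lift_x]
  rfl

theorem iL_t (m n : ℕ) (l h) : iL C m n (Tt C l h) = Tt C l (Nat.lt_add_right n h) := by
  rw [iL, KData.lift_t]
  exact Tt_congr _ (by omega)

theorem iR_t (m n : ℕ) (l h) :
    iR C m n (Tt C l h) = Tt C (m + l) (Nat.add_lt_add_left h m) := by
  rw [iR, KData.lift_t]
  rfl

theorem iL_e (m n : ℕ) (ν) :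
    iL C m n (Ee C ν) = (algData C (m + n)).eb 0 m (by omega) ν := by
  rw [iL, KData.lift_e]
  rfl

theorem iR_e (m n : ℕ) (ν) :
    iR C m n (Ee C ν) = (algData C (m + n)).eb m n (by omega) ν := by
  rw [iR, KData.lift_e]
  rfl

theorem i_comm (m n : ℕ) (a : Alg C m) (b : Alg C n) : Commute (iL C m n a) (iR C m n b) := by
  apply comm_of_gens
  · intro ν
    apply Commute.symm
    apply comm_of_gens
    · intro ν'
      rw [iL_e, iR_e]
      apply KData.eb_comm_eb
    · intro a
      rw [iL_e, iR_x]
      exact ((algData C (m + n)).eb_comm_x _ _ _ _ _).symm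
    · intro l h
      rw [iL_e, iR_t]
      exact ((algData C (m + n)).eb_comm_t _ _ _ _ _ _ (by omega)).symm
  · intro a
    apply Commute.symm
    apply comm_of_gens
    · intro ν'
      rw [iL_x, iR_e]
      apply KData.eb_comm_x
    · intro b
      rw [iL_x, iR_x]
      exact (algData C (m + n)).xx _ _
    · intro l h
      rw [iL_x, iR_t]
      refine ((algData C (m + n)).x_comm_t _ _ _ ?_ ?_).symm <;> simp <;> omega
  · intro l h
    apply Commute.symm
    apply comm_of_gens
    · intro ν'
      rw [iL_t, iR_e]
      exact ((algData C (m + n)).eb_comm_t _ _ _ _ _ _ (by omega))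
    · intro b
      rw [iL_t, iR_x]
      refine ((algData C (m + n)).x_comm_t _ _ _ ?_ ?_) <;> simp <;> omega
    · intro l' h'
      rw [iL_t, iR_t]
      exact (algData C (m + n)).tautau _ _ _ _ (by omega)

variable (C) in
/-- The map `ι`. -/
noncomputable def iT (m n : ℕ) : (Alg C m ⊗[k] Alg C n) →ₐ[k] Alg C (m + n) :=
  Algebra.TensorProduct.lift (iL C m n) (iR C m n) (i_comm m n)

theorem iT_tmul (m n : ℕ) (a : Alg C m) (b : Alg C n) :
    iT C m n (a ⊗ₜ[k] b) = iL C m n a * iR C m n b := by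
  simp [iT]

theorem iT_e (m n : ℕ) (ν ν') :
    iT C m n (Ee C ν ⊗ₜ[k] Ee C ν') = Ee C (Fin.append ν ν') := by
  rw [iT_tmul, iL_e, iR_e]
  apply (algData C (m + n)).ext_e
  intro κ
  rw [mul_assoc, KData.eb_mul]
  have h3 : Ee C (Fin.append ν ν') * (algData C (m + n)).e κ =
    if Fin.append ν ν' = κ then Ee C (Fin.append ν ν') else 0 := (algData C (m + n)).ee _ κ
  rw [h3]
  have key : Fin.append ν ν' = κ ↔ κ ∘ off m n le_rfl = ν' ∧ κ ∘ off 0 m (by omega) = ν := by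
    constructor
    · rintro rfl
      constructor
      · funext a
        exact Fin.append_right ν ν' a
      · funext a
        have := Fin.append_left ν ν' a
        rw [← this]
        simp only [Function.comp]
        congr 1
        simp [off, Fin.ext_iff]
    · rintro ⟨rfl, rfl⟩
      funext a
      refine Fin.addCases (fun a => ?_) (fun a => ?_) a
      · rw [Fin.append_left]
        simp only [Function.comp]
        congr 1
        simp [off, Fin.ext_iff]
      · rw [Fin.append_right]
        rfl
  by_cases h1 : κ ∘ off m n le_rfl = ν'
  · by_cases h2 : κ ∘ off 0 m (by omega) = ν
    · rw [if_pos h1, if_pos (key.2 ⟨h1, h2⟩), KData.eb_mul, if_pos h2, key.2 ⟨h1, h2⟩]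
      rfl
    · rw [if_pos h1, if_neg (fun h => h2 (key.1 h).2), KData.eb_mul, if_neg h2]
  · rw [if_neg h1, if_neg (fun h => h1 (key.1 h).1), mul_zero]

end Block

end KLR


namespace KLR

open scoped TensorProduct

section Anti

open MulOpposite

variable {k : Type} [Field k] {I : Type} [Fintype I] [DecidableEq I] {C : CartanDatum k I}
variable {N : ℕ} {A : Type} [Ring A] [Algebra k A] (D : KData C N A)

theorem Qel_op (i j : I) (u v : A) (h : Commute u v) :
    Qel C i j (op u) (op v) = op (Qel C i j u v) := by
  unfold Qel
  split_ifs
  · simp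
  · simp only [Finset.op_sum, apply_ite op, op_smul, op_mul, op_pow, op_zero]
    refine Finset.sum_congr rfl fun p _ => Finset.sum_congr rfl fun q _ => ?_
    have : op u ^ p * op v ^ q = op v ^ q * op u ^ p := by
      rw [← op_pow, ← op_pow, ← op_mul, ← op_mul, (h.pow_pow p q).eq]
    rw [this]

theorem Qdiff_op (i j : I) (u v w : A) (h : Commute u v) (h' : Commute u w) (h'' : Commute w v) :
    Qdiff C i j (op u) (op v) (op w) = op (Qdiff C i j u v w) := by
  unfold Qdiff
  split_ifs
  · simp
  · simp only [Finset.op_sum, apply_ite op, op_smul, op_mul, op_pow, op_zero]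
    refine Finset.sum_congr rfl fun p _ => Finset.sum_congr rfl fun q _ => ?_
    have h1 : ∀ c d : ℕ, op u ^ c * op w ^ d = op w ^ d * op u ^ c := by
      intro c d
      rw [← op_pow, ← op_pow, ← op_mul, ← op_mul, (h'.pow_pow c d).eq]
    simp only [h1]
    have h2 : Commute (∑ c ∈ Finset.range p, op w ^ (p - 1 - c) * op u ^ c) (op v ^ q) := by
      apply Commute.pow_right
      apply Finset.sum_induction _ (fun z => Commute z (op v))
      · intro a b ha hb; exact ha.add_left hb
      · exact Commute.zero_left _
      · intro c _
        exact ((Commute.op h'').pow_left _).mul_left ((Commute.op h).pow_left _)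
    rw [h2.eq]

theorem KData.e_mul_t (l : ℕ) (h : l + 1 < N) (ν : Fin N → I) :
    D.e ν * D.t l h =
      D.t l h * D.e (ν ∘ Equiv.swap (⟨l, Nat.lt_of_succ_lt h⟩ : Fin N) ⟨l + 1, h⟩) := by
  rw [D.taue]
  congr 2
  funext a
  simp

theorem KData.cxe (a : Fin N) (ν) : Commute (D.x a) (D.e ν) := D.xe a ν

theorem swap3 {X : Type} [DecidableEq X] (a b c : X) (hab : a ≠ b) (hac : a ≠ c) (hbc : b ≠ c)
    (z : X) : Equiv.swap a b (Equiv.swap b c (Equiv.swap a b z)) = Equiv.swap a c z := by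
  simp only [Equiv.swap_apply_def]
  split_ifs <;> simp_all

theorem swap3' {X : Type} [DecidableEq X] (a b c : X) (hab : a ≠ b) (hac : a ≠ c) (hbc : b ≠ c)
    (z : X) : Equiv.swap b c (Equiv.swap a b (Equiv.swap b c z)) = Equiv.swap a c z := by
  simp only [Equiv.swap_apply_def]
  split_ifs <;> simp_all

theorem KData.Qel_e (i j : I) (a b : Fin N) (ν) :
    Commute (Qel C i j (D.x a) (D.x b)) (D.e ν) := by
  unfold Qel
  split_ifs
  · exact Commute.zero_left _
  · refine Commute.sum_left _ _ _ fun p _ => Commute.sum_left _ _ _ fun q _ => ?_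
    split_ifs
    · exact (((D.cxe a ν).pow_left p).mul_left
        ((D.cxe b ν).pow_left q)).smul_left _
    · exact Commute.zero_left _

theorem KData.Qdiff_e (i j : I) (a b c : Fin N) (ν) :
    Commute (Qdiff C i j (D.x a) (D.x b) (D.x c)) (D.e ν) := by
  unfold Qdiff
  split_ifs
  · exact Commute.zero_left _
  · refine Commute.sum_left _ _ _ fun p _ => Commute.sum_left _ _ _ fun q _ => ?_
    split_ifs
    · refine Commute.smul_left (Commute.mul_left (Commute.sum_left _ _ _ fun c _ => ?_) ?_) _
      · exact ((D.cxe _ ν).pow_left _).mul_left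
          ((D.cxe _ ν).pow_left _)
      · exact ((D.cxe b ν).pow_left q)
    · exact Commute.zero_left _

/-- The opposite family of generators. -/
noncomputable def KData.opp : KData C N Aᵐᵒᵖ where
  e ν := op (D.e ν)
  x a := op (D.x a)
  t l h := op (D.t l h)
  ee ν ν' := by
    rw [← op_mul, D.ee]
    by_cases h : ν = ν'
    · subst h; simp
    · simp [h, Ne.symm h]
  esum := by rw [← Finset.op_sum, D.esum, op_one]
  xx a b := by rw [← op_mul, ← op_mul, D.xx]
  xe a b := by rw [← op_mul, ← op_mul, D.xe]
  taue l h ν := by rw [← op_mul, ← op_mul, D.e_mul_t]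
  tautau l h l' h' hh := by rw [← op_mul, ← op_mul, D.tautau _ _ _ _ hh]
  tausq l h ν := by
    rw [Qel_op _ _ _ _ (D.xx _ _), ← op_pow, ← op_mul, ← op_mul]
    congr 1
    rw [pow_two, ← mul_assoc, D.e_mul_t, mul_assoc, D.e_mul_t, ← mul_assoc, ← pow_two,
      ← (D.Qel_e _ _ _ _ _).eq, ← D.tausq]
    congr 2
    funext a
    simp
  taux l h m ν := by
    rw [← op_mul, ← op_mul, ← op_sub, ← op_mul]
    have h1 : ∀ (P Q : Prop) [Decidable P] [Decidable Q] (e : A),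
      (if P then -(op e) else if Q then op e else 0) =
        op (if P then -e else if Q then e else 0) := by
      intros; split_ifs <;> simp
    rw [h1]
    congr 1
    set s := Equiv.swap (⟨l, Nat.lt_of_succ_lt h⟩ : Fin N) ⟨l + 1, h⟩ with hs
    have h2 := D.taux l h (s m) (ν ∘ s)
    rw [← hs] at h2
    have h3 : D.e ν * (D.x m * D.t l h - D.t l h * D.x (s m)) =
      -((D.t l h * D.x (s m) - D.x (s (s m)) * D.t l h) * D.e (ν ∘ s)) := by
      have : s (s m) = m := by simp [hs]
      rw [this, mul_sub, ← mul_assoc, ← D.xe, mul_assoc, ← mul_assoc (D.e ν), D.e_mul_t, ← hs,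
        mul_assoc (D.t l h), ← D.xe]
      noncomm_ring
    rw [h3, h2]
    have e1 : s m = ⟨l, Nat.lt_of_succ_lt h⟩ ↔ m = ⟨l + 1, h⟩ := by
      rw [← Equiv.eq_symm_apply]; simp [hs]
    have e2 : s m = ⟨l + 1, h⟩ ↔ m = ⟨l, Nat.lt_of_succ_lt h⟩ := by
      rw [← Equiv.eq_symm_apply]; simp [hs]
    have e3 : (ν ∘ s) ⟨l, Nat.lt_of_succ_lt h⟩ = ν ⟨l + 1, h⟩ := by simp [hs]
    have e4 : (ν ∘ s) ⟨l + 1, h⟩ = ν ⟨l, Nat.lt_of_succ_lt h⟩ := by simp [hs]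
    simp only [e1, e2, e3, e4]
    by_cases hν : ν ⟨l, Nat.lt_of_succ_lt h⟩ = ν ⟨l + 1, h⟩
    · have e5 : ν ∘ s = ν := by
        funext a
        simp only [Function.comp, hs, Equiv.swap_apply_def]
        split_ifs with ha hb
        · rw [ha, hν]
        · rw [hb, hν]
        · rfl
      rw [e5]
      by_cases ha : m = ⟨l, Nat.lt_of_succ_lt h⟩
      · have : ¬ m = ⟨l + 1, h⟩ := by rw [ha]; simp
        simp [ha, hν]
      · by_cases hb : m = ⟨l + 1, h⟩
        · simp [hb, hν]
        · simp [ha, hb]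
    · simp [hν, Ne.symm hν]
  braid l h ν := by
    rw [← op_mul, ← op_mul, ← op_mul, ← op_mul, ← op_sub, ← op_mul,
      Qdiff_op _ _ _ _ _ (D.xx _ _) (D.xx _ _) (D.xx _ _), ← op_mul]
    have h1 : ∀ (P : Prop) [Decidable P] (e : A),
      (if P then (op e) else 0) = op (if P then e else 0) := by
      intros; split_ifs <;> simp
    rw [h1]
    congr 1
    have h3 : ∀ l1 l2 l3 a1 a2 a3, D.e ν * (D.t l1 a1 * (D.t l2 a2 * D.t l3 a3)) =
        D.t l1 a1 * D.t l2 a2 * D.t l3 a3 *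
        D.e (((ν ∘ Equiv.swap (⟨l1, Nat.lt_of_succ_lt a1⟩ : Fin N) ⟨l1 + 1, a1⟩) ∘
          Equiv.swap (⟨l2, Nat.lt_of_succ_lt a2⟩ : Fin N) ⟨l2 + 1, a2⟩) ∘
          Equiv.swap (⟨l3, Nat.lt_of_succ_lt a3⟩ : Fin N) ⟨l3 + 1, a3⟩) := by
      intros
      rw [← mul_assoc, D.e_mul_t, mul_assoc, ← mul_assoc (D.e _), D.e_mul_t, mul_assoc, D.e_mul_t]
      simp only [mul_assoc]
    have n1 : (⟨l, by omega⟩ : Fin N) ≠ ⟨l + 1, by omega⟩ := by simp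
    have n2 : (⟨l, by omega⟩ : Fin N) ≠ ⟨l + 2, by omega⟩ := by simp
    have n3 : (⟨l + 1, by omega⟩ : Fin N) ≠ ⟨l + 2, by omega⟩ := by simp
    rw [mul_sub, h3, h3]
    have q1 : ((ν ∘ Equiv.swap (⟨l, by omega⟩ : Fin N) ⟨l + 1, by omega⟩) ∘
          Equiv.swap (⟨l + 1, by omega⟩ : Fin N) ⟨l + 1 + 1, by omega⟩) ∘
          Equiv.swap (⟨l, by omega⟩ : Fin N) ⟨l + 1, by omega⟩ =
          ν ∘ Equiv.swap (⟨l, by omega⟩ : Fin N) ⟨l + 2, by omega⟩ := by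
      funext z
      exact congrArg ν (swap3 _ _ _ n1 n2 n3 z)
    have q2 : ((ν ∘ Equiv.swap (⟨l + 1, by omega⟩ : Fin N) ⟨l + 1 + 1, by omega⟩) ∘
          Equiv.swap (⟨l, by omega⟩ : Fin N) ⟨l + 1, by omega⟩) ∘
          Equiv.swap (⟨l + 1, by omega⟩ : Fin N) ⟨l + 1 + 1, by omega⟩ =
          ν ∘ Equiv.swap (⟨l, by omega⟩ : Fin N) ⟨l + 2, by omega⟩ := by
      funext z
      exact congrArg ν (swap3' _ _ _ n1 n2 n3 z)
    rw [q1, q2, ← sub_mul, D.braid]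
    have q3 : (ν ∘ Equiv.swap (⟨l, by omega⟩ : Fin N) ⟨l + 2, by omega⟩) ⟨l, by omega⟩ =
      ν ⟨l + 2, by omega⟩ := by simp
    have q4 : (ν ∘ Equiv.swap (⟨l, by omega⟩ : Fin N) ⟨l + 2, by omega⟩) ⟨l + 2, by omega⟩ =
      ν ⟨l, by omega⟩ := by simp
    have q5 : (ν ∘ Equiv.swap (⟨l, by omega⟩ : Fin N) ⟨l + 2, by omega⟩) ⟨l + 1, by omega⟩ =
      ν ⟨l + 1, by omega⟩ := by
      simp only [Function.comp]
      rw [Equiv.swap_apply_of_ne_of_ne n1.symm n3]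
    simp only [q3, q4, q5]
    by_cases hν : ν ⟨l, by omega⟩ = ν ⟨l + 2, by omega⟩
    · have e5 : ν ∘ Equiv.swap (⟨l, by omega⟩ : Fin N) ⟨l + 2, by omega⟩ = ν := by
        funext a
        simp only [Function.comp, Equiv.swap_apply_def]
        split_ifs with ha hb
        · rw [ha, hν]
        · rw [hb, hν]
        · rfl
      rw [if_pos hν.symm, if_pos hν, e5, (D.Qdiff_e _ _ _ _ _ _).eq, hν]
    · rw [if_neg (Ne.symm hν), if_neg hν]

variable (C) in
/-- The anti-automorphism fixing the generators. -/
noncomputable def psi (N : ℕ) : Alg C N →ₐ[k] (Alg C N)ᵐᵒᵖ := ((algData C N).opp).lift C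

theorem psi_e (ν : Fin N → I) : psi C N (Ee C ν) = op (Ee C ν) := KData.lift_e C _ ν
theorem psi_x (a : Fin N) : psi C N (Xx C a) = op (Xx C a) := KData.lift_x C _ a
theorem psi_t (l h) : psi C N (Tt C l h) = op (Tt C l h) := KData.lift_t C _ l h

theorem psi_psi (r : Alg C N) : (psi C N (psi C N r).unop).unop = r := by
  let S : Subalgebra k (Alg C N) :=
    { carrier := {r | (psi C N (psi C N r).unop).unop = r}
      mul_mem' := by
        intro a b ha hb
        simp only [Set.mem_setOf_eq] at *
        rw [map_mul, unop_mul, map_mul, unop_mul, ha, hb]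
      add_mem' := by
        intro a b ha hb
        simp only [Set.mem_setOf_eq] at *
        rw [map_add, unop_add, map_add, unop_add, ha, hb]
      algebraMap_mem' := by
        intro c
        simp only [Set.mem_setOf_eq, AlgHom.commutes, MulOpposite.algebraMap_apply, unop_op] }
  refine alg_top C S ?_ ?_ ?_ r
  · intro ν
    change (psi C N (psi C N _).unop).unop = _
    rw [psi_e, unop_op, psi_e, unop_op]
  · intro ν
    change (psi C N (psi C N _).unop).unop = _
    rw [psi_x, unop_op, psi_x, unop_op]
  · intro l h
    change (psi C N (psi C N _).unop).unop = _
    rw [psi_t, unop_op, psi_t, unop_op]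

variable (C) in
/-- The anti-automorphism as a linear equivalence. -/
noncomputable def psiE (N : ℕ) : Alg C N ≃ₗ[k] Alg C N where
  toFun r := (psi C N r).unop
  invFun r := (psi C N r).unop
  map_add' a b := by simp
  map_smul' a b := by simp
  left_inv := psi_psi
  right_inv := psi_psi

theorem psiE_mul (a b : Alg C N) : psiE C N (a * b) = psiE C N b * psiE C N a := by
  change (psi C N _).unop = (psi C N _).unop * (psi C N _).unop
  simp

theorem psiE_one : psiE C N 1 = 1 := by
  change (psi C N _).unop = _
  simp

theorem psiE_of_gens {m : ℕ} (φ : Alg C m →ₐ[k] Alg C N)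
    (he : ∀ ν, psiE C N (φ (Ee C ν)) = φ (Ee C ν))
    (hx : ∀ a, psiE C N (φ (Xx C a)) = φ (Xx C a))
    (ht : ∀ l h, psiE C N (φ (Tt C l h)) = φ (Tt C l h)) (r : Alg C m) :
    psiE C N (φ r) = φ (psiE C m r) := by
  let S : Subalgebra k (Alg C m) :=
    { carrier := {r | psiE C N (φ r) = φ (psiE C m r)}
      mul_mem' := by
        intro a b ha hb
        simp only [Set.mem_setOf_eq] at *
        rw [map_mul, psiE_mul, psiE_mul, map_mul, ha, hb]
      add_mem' := by
        intro a b ha hb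
        simp only [Set.mem_setOf_eq] at *
        rw [map_add, map_add, map_add, map_add, ha, hb]
      algebraMap_mem' := by
        intro c
        simp only [Set.mem_setOf_eq]
        rw [Algebra.algebraMap_eq_smul_one, map_smul, map_smul, map_smul, map_smul, map_one,
          psiE_one, psiE_one, map_one] }
  have e1 : ∀ ν : Fin m → I, psiE C m (Ee C ν) = Ee C ν := fun ν => by
    change (psi C m _).unop = _; rw [psi_e, unop_op]
  have e2 : ∀ ν : Fin m, psiE C m (Xx C ν) = Xx C ν := fun ν => by
    change (psi C m _).unop = _; rw [psi_x, unop_op]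
  have e3 : ∀ l h, psiE C m (Tt C l h) = Tt C l h := fun l h => by
    change (psi C m _).unop = _; rw [psi_t, unop_op]
  refine alg_top C S ?_ ?_ ?_ r
  · intro ν; change psiE C N _ = _; rw [e1, he]
  · intro ν; change psiE C N _ = _; rw [e2, hx]
  · intro l h; change psiE C N _ = _; rw [e3, ht]

theorem psiE_gen_e (ν : Fin N → I) : psiE C N (Ee C ν) = Ee C ν := by
  change (psi C N _).unop = _; rw [psi_e, unop_op]
theorem psiE_gen_x (a : Fin N) : psiE C N (Xx C a) = Xx C a := by
  change (psi C N _).unop = _; rw [psi_x, unop_op]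
theorem psiE_gen_t (l h) : psiE C N (Tt C l h) = Tt C l h := by
  change (psi C N _).unop = _; rw [psi_t, unop_op]

theorem psiE_eb (o m : ℕ) (hN : o + m ≤ N) (ν : Fin m → I) :
    psiE C N ((algData C N).eb o m hN ν) = (algData C N).eb o m hN ν := by
  simp only [KData.eb, map_sum, apply_ite (psiE C N), map_zero]
  refine Finset.sum_congr rfl fun κ _ => ?_
  congr 1
  exact psiE_gen_e κ

theorem psiE_iL (m n : ℕ) (r : Alg C m) :
    psiE C (m + n) (iL C m n r) = iL C m n (psiE C m r) := by
  apply psiE_of_gens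
  · intro ν; rw [iL_e, psiE_eb]
  · intro a; rw [iL_x, psiE_gen_x]
  · intro l h; rw [iL_t, psiE_gen_t]

theorem psiE_iR (m n : ℕ) (r : Alg C n) :
    psiE C (m + n) (iR C m n r) = iR C m n (psiE C n r) := by
  apply psiE_of_gens
  · intro ν; rw [iR_e, psiE_eb]
  · intro a; rw [iR_x, psiE_gen_x]
  · intro l h; rw [iR_t, psiE_gen_t]

theorem psiE_iT (m n : ℕ) (z : Alg C m ⊗[k] Alg C n) :
    psiE C (m + n) (iT C m n z) =
      iT C m n (TensorProduct.congr (psiE C m) (psiE C n) z) := by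
  induction z with
  | zero => simp
  | add a b ha hb => simp only [map_add, ha, hb]
  | tmul a b =>
    rw [iT_tmul, TensorProduct.congr_tmul, iT_tmul, psiE_mul, psiE_iL, psiE_iR,
      (i_comm m n _ _).eq]


end Anti

end KLR


namespace KLR

section Rep

variable {k : Type} [Field k] {I : Type} [Fintype I] [DecidableEq I] {C : CartanDatum k I}
variable {K : Type} [Field K] [Algebra k K]

theorem swap_swap_comm {X : Type} [DecidableEq X] (a b c d : X) (h1 : a ≠ c) (h2 : a ≠ d)
    (h3 : b ≠ c) (h4 : b ≠ d) (z : X) :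
    Equiv.swap a b (Equiv.swap c d z) = Equiv.swap c d (Equiv.swap a b z) := by
  simp only [Equiv.swap_apply_def]
  grind

theorem Qel_symm {A : Type} [CommRing A] [Algebra k A] (i j : I) (u v : A) :
    Qel C i j u v = Qel C j i v u := by
  unfold Qel
  by_cases h : i = j
  · simp [h]
  · rw [if_neg h, if_neg (Ne.symm h), Finset.sum_comm]
    refine Finset.sum_congr rfl fun q _ => Finset.sum_congr rfl fun p _ => ?_
    have e1 := C.symmetrize i j
    rw [C.t_symm i j p q, mul_comm (u ^ p), e1, add_comm]

theorem Qdiff_mul {A : Type} [CommRing A] [Algebra k A] (i j : I) (u v w : A) :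
    Qdiff C i j u v w * (u - w) = Qel C i j u v - Qel C i j w v := by
  unfold Qdiff Qel
  split_ifs with h
  · simp
  · rw [Finset.sum_mul, ← Finset.sum_sub_distrib]
    refine Finset.sum_congr rfl fun q _ => ?_
    rw [Finset.sum_mul, ← Finset.sum_sub_distrib]
    refine Finset.sum_congr rfl fun p _ => ?_
    split_ifs
    · rw [← smul_sub, smul_mul_assoc, ← sub_mul, ← geom_sum₂_mul u w q]
      ring_nf
    · simp

variable (C) in
/-- Generic evaluation data. -/
structure GData (K : Type) [Field K] [Algebra k K] (M : ℕ) where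
  y : Fin M → K
  μ : Fin M → I
  inj : Function.Injective y
  gen : ∀ p q, p ≠ q → μ p ≠ μ q → Qel C (μ p) (μ q) (y p) (y q) ≠ 0

variable {M N : ℕ} (G : GData C K M)

namespace GData

/-- diagonal coefficient -/
noncomputable def ca (p q : Fin M) : K := if G.μ p = G.μ q then -(G.y p - G.y q)⁻¹ else 0

/-- product of off-diagonal coefficients -/
noncomputable def cp (p q : Fin M) : K :=
  if G.μ p = G.μ q then -((G.y p - G.y q)⁻¹ ^ 2) else Qel C (G.μ p) (G.μ q) (G.y p) (G.y q)

/-- off-diagonal coefficient -/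
noncomputable def cc (p q : Fin M) : K := if p < q then 1 else G.cp p q

theorem y_ne {p q : Fin M} (h : p ≠ q) : G.y p - G.y q ≠ 0 :=
  sub_ne_zero.2 fun e => h (G.inj e)

theorem ca_symm (p q) : G.ca q p = - G.ca p q := by
  unfold ca
  by_cases h : G.μ p = G.μ q
  · rw [if_pos h, if_pos h.symm, ← neg_sub (G.y p), inv_neg]
  · rw [if_neg h, if_neg (Ne.symm h), neg_zero]

theorem cp_symm (p q) : G.cp q p = G.cp p q := by
  unfold cp
  by_cases h : G.μ p = G.μ q
  · rw [if_pos h, if_pos h.symm, ← neg_sub (G.y p), inv_neg]; ring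
  · rw [if_neg h, if_neg (Ne.symm h), Qel_symm]

theorem cp_ne {p q} (h : p ≠ q) : G.cp p q ≠ 0 := by
  unfold cp
  split_ifs with hh
  · simpa using G.y_ne h
  · exact G.gen _ _ h hh

theorem cc_ne {p q} (h : p ≠ q) : G.cc p q ≠ 0 := by
  unfold cc
  split_ifs with hh
  · exact one_ne_zero
  · exact G.cp_ne h

theorem cc_mul {p q} (h : p ≠ q) : G.cc p q * G.cc q p = G.cp p q := by
  unfold cc
  rcases lt_or_gt_of_ne h with hh | hh
  · rw [if_pos hh, if_neg hh.not_gt, one_mul, cp_symm]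
  · rw [if_pos hh, if_neg hh.not_gt, mul_one]

theorem ca_sq {p q} : G.ca p q * G.ca p q + G.cp p q =
    Qel C (G.μ p) (G.μ q) (G.y p) (G.y q) := by
  unfold ca cp
  split_ifs with hh
  · rw [Qel, if_pos hh]; ring
  · simp

theorem ca_E1 {p q r} (h1 : p ≠ q) (h2 : p ≠ r) (h3 : q ≠ r) :
    G.ca q r * G.ca p q - G.ca q r * G.ca p r - G.ca p q * G.ca p r = 0 := by
  have := G.y_ne h1
  have := G.y_ne h2
  have := G.y_ne h3
  unfold ca
  split_ifs <;> try simp_all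
  field_simp
  ring

theorem ca_braid {p q r} (h1 : p ≠ q) (h2 : p ≠ r) (h3 : q ≠ r) :
    G.ca p q * G.ca q r ^ 2 - G.ca q r * G.ca p q ^ 2 + G.ca p r * (G.cp q r - G.cp p q) =
      if G.μ p = G.μ r then Qdiff C (G.μ p) (G.μ q) (G.y p) (G.y q) (G.y r) else 0 := by
  have e1 := G.ca_E1 h1 h2 h3
  have hy := G.y_ne h2
  by_cases hpr : G.μ p = G.μ r
  · rw [if_pos hpr]
    by_cases hpq : G.μ p = G.μ q
    · have c1 : G.cp q r = - G.ca q r ^ 2 := by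
        unfold cp ca; rw [if_pos (hpq.symm.trans hpr), if_pos (hpq.symm.trans hpr)]; ring
      have c2 : G.cp p q = - G.ca p q ^ 2 := by
        unfold cp ca; rw [if_pos hpq, if_pos hpq]; ring
      rw [c1, c2, Qdiff, if_pos hpq]
      linear_combination (G.ca q r - G.ca p q) * e1
    · have hqr : G.μ q ≠ G.μ r := fun h => hpq (hpr.trans h.symm)
      have := Qdiff_mul (C := C) (G.μ p) (G.μ q) (G.y p) (G.y q) (G.y r)
      have a1 : G.ca p q = 0 := by simp [ca, hpq]
      have a2 : G.ca q r = 0 := by simp [ca, hqr]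
      have a3 : G.ca p r = -(G.y p - G.y r)⁻¹ := by simp [ca, hpr]
      have a4 : G.cp p q = Qel C (G.μ p) (G.μ q) (G.y p) (G.y q) := by simp [cp, hpq]
      have a5 : G.cp q r = Qel C (G.μ p) (G.μ q) (G.y r) (G.y q) := by
        rw [Qel_symm, hpr]; simp [cp, hqr]
      rw [a1, a2, a3, a4, a5]
      apply mul_right_cancel₀ hy
      rw [this]
      field_simp
      ring
  · rw [if_neg hpr]
    have a3 : G.ca p r = 0 := by simp [ca, hpr]
    rw [a3] at e1 ⊢
    linear_combination (G.ca q r - G.ca p q) * e1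

/-- composing an embedding with a transposition -/
def sw (a b : Fin N) (σ : Fin N ↪ Fin M) : Fin N ↪ Fin M := (Equiv.swap a b).toEmbedding.trans σ

@[simp] theorem sw_apply (a b : Fin N) (σ : Fin N ↪ Fin M) (z) :
    sw a b σ z = σ (Equiv.swap a b z) := rfl

theorem sw_sw (a b : Fin N) (σ : Fin N ↪ Fin M) : sw a b (sw a b σ) = σ := by
  ext z; simp

variable (K) in
/-- The representation space. -/
abbrev Sp (N M : ℕ) : Type := (Fin N ↪ Fin M) → K

/-- tau operator -/
noncomputable def opT (a b : Fin N) : Module.End k (Sp K N M) where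
  toFun f := fun σ => G.ca (σ a) (σ b) * f σ + G.cc (σ a) (σ b) * f (sw a b σ)
  map_add' f g := by ext σ; simp only [Pi.add_apply]; ring
  map_smul' c f := by ext σ; simp [mul_comm, smul_add]

/-- diagonal operators -/
noncomputable def opD : Sp K N M →ₐ[k] Module.End k (Sp K N M) :=
  Algebra.lmul k (Sp K N M)

/-- x as a function -/
noncomputable def fx (a : Fin N) : Sp K N M := fun σ => G.y (σ a)

variable (K) in
/-- e as a function -/
noncomputable def fe (μ : Fin M → I) (ν : Fin N → I) : Sp K N M :=
  fun σ => if μ ∘ σ = ν then 1 else 0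

theorem opD_apply (g f : Sp K N M) (σ) : opD (k := k) g f σ = g σ * f σ := rfl

theorem opT_apply (a b : Fin N) (f : Sp K N M) (σ) :
  G.opT a b f σ = G.ca (σ a) (σ b) * f σ + G.cc (σ a) (σ b) * f (sw a b σ) := rfl

theorem comp_sw (μ : Fin M → I) (a b : Fin N) (σ : Fin N ↪ Fin M) (ν : Fin N → I) :
    μ ∘ (sw a b σ) = ν ↔ μ ∘ σ = ν ∘ Equiv.swap a b := by
  constructor
  · rintro rfl; ext z; simp
  · intro h; ext z
    have := congrFun h (Equiv.swap a b z)
    simpa using this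

/-- The representation of the KLR algebra. -/
noncomputable def data (N : ℕ) : KData C N (Module.End k (Sp K N M)) where
  e ν := opD (fe K G.μ ν)
  x a := opD (G.fx a)
  t l h := G.opT ⟨l, Nat.lt_of_succ_lt h⟩ ⟨l + 1, h⟩
  ee ν ν' := by
    rw [← map_mul]
    split_ifs with h
    · subst h; congr 1; ext σ; simp [fe]
    · rw [← map_zero (opD (k := k)), ]; congr 1; ext σ; simp only [fe, Pi.mul_apply, Pi.zero_apply]
      split_ifs <;> simp_all
  esum := by
    rw [← map_sum, ← map_one (opD (k := k))]; congr 1; ext σ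
    simp [fe, Finset.sum_apply]
  xx a b := by rw [← map_mul, ← map_mul, mul_comm]
  xe a b := by rw [← map_mul, ← map_mul, mul_comm]
  taue l h ν := by
    refine LinearMap.ext fun f => funext fun σ => ?_
    simp only [Module.End.mul_apply, opD_apply, opT_apply, fe, comp_sw]
    set a : Fin N := ⟨l, Nat.lt_of_succ_lt h⟩ with ha
    set b : Fin N := ⟨l + 1, h⟩ with hb
    by_cases h1 : G.μ (σ a) = G.μ (σ b)
    · have : G.μ ∘ σ = G.μ ∘ (sw a b σ) := by
        ext z
        by_cases ha : z = a
        · subst ha; simp [h1]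
        · by_cases hb : z = b
          · subst hb; simp [h1]
          · simp [Equiv.swap_apply_of_ne_of_ne ha hb]
      have h2 : G.μ ∘ σ = ν ↔ G.μ ∘ σ = ν ∘ Equiv.swap a b := by
        rw [← comp_sw, ← this]
      by_cases h3 : G.μ ∘ σ = ν
      · rw [if_pos h3, if_pos (h2.1 h3)]; ring
      · rw [if_neg h3, if_neg (fun h => h3 (h2.2 h))]; ring
    · simp only [ca, if_neg h1]
      split_ifs <;> ring
  tautau l h l' h' hh := by
    refine LinearMap.ext fun f => funext fun σ => ?_
    simp only [Module.End.mul_apply, opT_apply]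
    have e1 : ∀ σ : Fin N ↪ Fin M, sw ⟨l', Nat.lt_of_succ_lt h'⟩ ⟨l' + 1, h'⟩ (sw ⟨l, Nat.lt_of_succ_lt h⟩ ⟨l + 1, h⟩ σ) =
      sw ⟨l, Nat.lt_of_succ_lt h⟩ ⟨l + 1, h⟩ (sw ⟨l', Nat.lt_of_succ_lt h'⟩ ⟨l' + 1, h'⟩ σ) := by
      intro σ; ext z; simp only [sw_apply]
      congr 2
      exact swap_swap_comm _ _ _ _ (by simp; omega) (by simp; omega) (by simp; omega)
        (by simp; omega) z
    simp only [e1, sw_apply]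
    have f1 : ∀ z : Fin N, z.val ≠ l → z.val ≠ l + 1 → 
      Equiv.swap (⟨l, Nat.lt_of_succ_lt h⟩ : Fin N) ⟨l + 1, h⟩ z = z := by
      intro z h1 h2
      exact Equiv.swap_apply_of_ne_of_ne (by simpa [Fin.ext_iff]) (by simpa [Fin.ext_iff])
    have f2 : ∀ z : Fin N, z.val ≠ l' → z.val ≠ l' + 1 → 
      Equiv.swap (⟨l', Nat.lt_of_succ_lt h'⟩ : Fin N) ⟨l' + 1, h'⟩ z = z := by
      intro z h1 h2
      exact Equiv.swap_apply_of_ne_of_ne (by simpa [Fin.ext_iff]) (by simpa [Fin.ext_iff])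
    rw [f1 ⟨l', _⟩ (by simp; omega) (by simp; omega), f1 ⟨l' + 1, _⟩ (by simp; omega) (by simp; omega),
      f2 ⟨l, _⟩ (by simp; omega) (by simp; omega), f2 ⟨l + 1, _⟩ (by simp; omega) (by simp; omega)]
    ring
  tausq l h ν := by
    rw [← map_Qel]
    refine LinearMap.ext fun f => funext fun σ => ?_
    simp only [Module.End.mul_apply, opD_apply, opT_apply, fe, comp_sw, pow_two, sw_sw, sw_apply,
      Equiv.swap_apply_left, Equiv.swap_apply_right]
    set a : Fin N := ⟨l, Nat.lt_of_succ_lt h⟩ with ha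
    set b : Fin N := ⟨l + 1, h⟩ with hb
    have hab : σ a ≠ σ b := fun h => by simpa [ha, hb] using σ.injective h
    have hQ : ∀ i j, Qel C i j (G.fx a) (G.fx b) σ = Qel C i j (G.y (σ a)) (G.y (σ b)) := 
      fun i j => map_Qel C (Pi.evalAlgHom k (fun _ : Fin N ↪ Fin M => K) σ) i j _ _
    rw [hQ, G.ca_symm (σ a) (σ b)]
    by_cases h3 : G.μ ∘ σ = ν
    · subst h3
      simp only [if_true, Function.comp_apply]
      rw [← G.ca_sq, ← G.cc_mul hab]
      ring
    · simp only [if_neg h3]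
      ring
  taux l h m ν := by
    refine LinearMap.ext fun f => funext fun σ => ?_
    set a : Fin N := ⟨l, Nat.lt_of_succ_lt h⟩ with ha
    set b : Fin N := ⟨l + 1, h⟩ with hb
    have hab' : a ≠ b := by simp [ha, hb]
    have hab : σ a ≠ σ b := fun h => by simpa [ha, hb] using σ.injective h
    have e1 : (G.opT a b * opD (G.fx m) - opD (G.fx (Equiv.swap a b m)) * G.opT a b) = 
      opD (fun σ => G.ca (σ a) (σ b) * (G.y (σ m) - G.y (σ (Equiv.swap a b m)))) := by
      refine LinearMap.ext fun f => funext fun σ => ?_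
      simp only [Module.End.mul_apply, opD_apply, opT_apply, LinearMap.sub_apply, Pi.sub_apply, fx,
        sw_apply]
      ring
    rw [e1]
    have := G.y_ne hab
    by_cases hma : m = a
    · subst hma
      simp only [Module.End.mul_apply, opD_apply, Equiv.swap_apply_left, true_and, hab', false_and, 
        if_false]
      by_cases h3 : G.μ ∘ σ = ν
      · subst h3
        simp only [Function.comp_apply]
        split_ifs with h4
        · simp [ca, h4, opD_apply, fe, this]
        · simp [ca, h4]
      · split_ifs <;> simp [fe, h3, opD_apply]
    · by_cases hmb : m = b
      · subst hmb
        simp only [Module.End.mul_apply, opD_apply, Equiv.swap_apply_right, true_and, hab'.symm, false_and, 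
          if_false]
        by_cases h3 : G.μ ∘ σ = ν
        · subst h3
          simp only [Function.comp_apply]
          split_ifs with h4
          · rw [ca, if_pos h4, ← neg_sub (G.y (σ a))]
            simp only [opD_apply, fe, if_true, one_mul]
            field_simp
          · simp [ca, h4]
        · split_ifs <;> simp [fe, h3, opD_apply]
      · simp only [hma, hmb, false_and, if_false, Equiv.swap_apply_of_ne_of_ne hma hmb]
        simp [opD_apply]
  braid l h2 ν := by
    rw [← map_Qdiff]
    refine LinearMap.ext fun f => funext fun σ => ?_
    set a : Fin N := ⟨l, Nat.lt_of_succ_lt (Nat.lt_of_succ_lt h2)⟩ with ha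
    set b : Fin N := ⟨l + 1, Nat.lt_of_succ_lt h2⟩ with hb
    set c : Fin N := ⟨l + 2, h2⟩ with hc
    have hab' : a ≠ b := by simp [ha, hb]
    have hac' : a ≠ c := by simp [ha, hc]
    have hbc' : b ≠ c := by simp [hb, hc]
    have hab : σ a ≠ σ b := fun h => hab' (σ.injective h)
    have hac : σ a ≠ σ c := fun h => hac' (σ.injective h)
    have hbc : σ b ≠ σ c := fun h => hbc' (σ.injective h)
    have hQ : ∀ i j, Qdiff C i j (G.fx a) (G.fx b) (G.fx c) σ = 
        Qdiff C i j (G.y (σ a)) (G.y (σ b)) (G.y (σ c)) := 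
      fun i j => map_Qdiff C (Pi.evalAlgHom k (fun _ : Fin N ↪ Fin M => K) σ) i j _ _ _
    have key : ∀ g : Sp K N M, (G.opT b c * G.opT a b * G.opT b c 
        - G.opT a b * G.opT b c * G.opT a b) g σ =
        (if G.μ (σ a) = G.μ (σ c) then 
          Qdiff C (G.μ (σ a)) (G.μ (σ b)) (G.y (σ a)) (G.y (σ b)) (G.y (σ c)) else 0) * g σ := by
      intro g
      rw [← G.ca_braid hab hac hbc]
      have s1 : sw b c (sw a b (sw b c σ)) = sw a b (sw b c (sw a b σ)) := by
        ext z
        simp only [sw_apply, swap3 a b c hab' hac' hbc', swap3' a b c hab' hac' hbc']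
      simp only [Module.End.mul_apply, opT_apply, LinearMap.sub_apply, Pi.sub_apply, sw_apply,
        Equiv.swap_apply_left, Equiv.swap_apply_right, sw_sw, s1,
        Equiv.swap_apply_of_ne_of_ne hab' hac', Equiv.swap_apply_of_ne_of_ne hac'.symm hbc'.symm]
      rw [G.ca_symm (σ a) (σ b), G.ca_symm (σ b) (σ c), ← G.cc_mul hbc, ← G.cc_mul hab]
      have e1 := G.ca_E1 hab hac hbc
      linear_combination (G.cc (σ b) (σ c) * g (sw b c σ) - G.cc (σ a) (σ b) * g (sw a b σ)) * e1
    rw [Module.End.mul_apply, key]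
    by_cases h3 : G.μ ∘ σ = ν
    · subst h3
      simp only [Function.comp_apply]
      split_ifs with h4
      · simp [opD_apply, hQ, fe]
      · simp
    · split_ifs <;> simp [opD_apply, fe, h3]

end GData

theorem Qel_one_zero (i j : I) (h : i ≠ j) : Qel C i j (1 : k) 0 ≠ 0 := by
  have hd := C.d_pos i
  have ha := C.a_nonpos i j h
  have : Qel C i j (1 : k) 0 = C.t i j (-(C.a i j)).toNat 0 := by
    unfold Qel
    rw [if_neg h, Finset.sum_eq_single (-(C.a i j)).toNat, Finset.sum_eq_single 0]
    · have : C.d i * ((-(C.a i j)).toNat : ℤ) + C.d j * ((0 : ℕ) : ℤ) = -(C.d i * C.a i j) := by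
        rw [Int.toNat_of_nonneg (by omega)]; simp
      rw [if_pos this]; simp
    · intro q _ hq
      split_ifs <;> simp [hq]
    · simp
    · intro p _ hp
      refine Finset.sum_eq_zero fun q _ => ?_
      split_ifs with hh
      · by_cases hq : q = 0
        · exfalso; apply hp
          subst hq
          have h2 : C.d i * (p : ℤ) = C.d i * (-(C.a i j)) := by
            push_cast at hh; linarith
          have := mul_left_cancel₀ hd.ne' h2
          omega
        · simp [hq]
      · rfl
    · simp
  rw [this]
  exact C.t_lead i j h

/-- The field of the generic data. -/
abbrev KK (k : Type) [Field k] (M : ℕ) : Type := FractionRing (MvPolynomial (Fin M) k)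

variable (C) in
/-- The generic data. -/
noncomputable def genD {M : ℕ} (μ : Fin M → I) : GData C (KK k M) M where
  y p := algebraMap (MvPolynomial (Fin M) k) _ (MvPolynomial.X p)
  μ := μ
  inj := (IsFractionRing.injective (MvPolynomial (Fin M) k) _).comp (MvPolynomial.X_injective)
  gen p q hpq hμ h := by
    have h1 : IsScalarTower.toAlgHom k (MvPolynomial (Fin M) k) (KK k M)
       (Qel C (μ p) (μ q) (MvPolynomial.X p) (MvPolynomial.X q)) = 0 := by
      rw [map_Qel]; exact h
    have h2 : Qel C (μ p) (μ q) (MvPolynomial.X p : MvPolynomial (Fin M) k) (MvPolynomial.X q) = 0 := by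
      apply IsFractionRing.injective (MvPolynomial (Fin M) k) (KK k M)
      rw [map_zero]; exact h1
    have h3 := congrArg (MvPolynomial.aeval (fun z => if z = p then (1 : k) else 0)) h2
    rw [map_Qel, MvPolynomial.aeval_X, MvPolynomial.aeval_X, if_pos rfl, if_neg hpq.symm, map_zero] at h3
    exact Qel_one_zero _ _ hμ h3

end Rep

end KLR


namespace KLR

open scoped TensorProduct

section Words

variable {N : ℕ}

/-- the simple transposition -/
abbrev ss (l : ℕ) (h : l + 1 < N) : Equiv.Perm (Fin N) :=
  Equiv.swap (⟨l, Nat.lt_of_succ_lt h⟩ : Fin N) ⟨l + 1, h⟩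

/-- descents of a word -/
def Desc (w : Fin N → Bool) (l : ℕ) (h : l + 1 < N) : Prop :=
  w ⟨l, Nat.lt_of_succ_lt h⟩ = true ∧ w ⟨l + 1, h⟩ = false

/-- weight of a word -/
def wt (w : Fin N → Bool) : ℕ := ∑ a : Fin N, if w a = true then 0 else a.val

theorem ss_left (l : ℕ) (h : l + 1 < N) : ss l h ⟨l, Nat.lt_of_succ_lt h⟩ = ⟨l + 1, h⟩ :=
  Equiv.swap_apply_left _ _

theorem ss_right (l : ℕ) (h : l + 1 < N) : ss l h ⟨l + 1, h⟩ = ⟨l, Nat.lt_of_succ_lt h⟩ :=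
  Equiv.swap_apply_right _ _

theorem ss_ne (l : ℕ) (h : l + 1 < N) (z : Fin N) (h1 : z.val ≠ l) (h2 : z.val ≠ l + 1) :
    ss l h z = z :=
  Equiv.swap_apply_of_ne_of_ne (by simpa [Fin.ext_iff]) (by simpa [Fin.ext_iff])

theorem ss_ss (w : Fin N → Bool) (l : ℕ) (h : l + 1 < N) : (w ∘ ss l h) ∘ ss l h = w := by
  ext z; simp

theorem ss_comm {X : Type} (w : Fin N → X) (l : ℕ) (h : l + 1 < N) (r : ℕ) (h' : r + 1 < N)
    (hlr : l + 1 < r ∨ r + 1 < l) : (w ∘ ss l h) ∘ ss r h' = (w ∘ ss r h') ∘ ss l h := by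
  ext z
  simp only [Function.comp_apply]
  congr 1
  exact swap_swap_comm _ _ _ _ (by simp; omega) (by simp; omega) (by simp; omega)
        (by simp; omega) z

theorem wt_desc (w : Fin N → Bool) (l : ℕ) (h : l + 1 < N) (hd : Desc w l h) :
    wt (w ∘ ss l h) + 1 = wt w := by
  have e1 : wt (w ∘ ss l h) = ∑ a : Fin N, if w a = true then 0 else (ss l h a).val := by
    rw [wt, ← Equiv.sum_comp (ss l h)]
    simp
  have e2 : ∑ a : Fin N, (if a = (⟨l + 1, h⟩ : Fin N) then 1 else 0) = 1 := by simp
  rw [e1]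
  conv_lhs => rw [← e2]
  rw [← Finset.sum_add_distrib, wt]
  refine Finset.sum_congr rfl fun a _ => ?_
  by_cases h1 : a = ⟨l, Nat.lt_of_succ_lt h⟩
  · subst h1; simp [hd.1]
  · by_cases h2 : a = ⟨l + 1, h⟩
    · subst h2; simp [hd.2]
    · rw [ss_ne l h a (fun e => h1 (Fin.ext e)) (fun e => h2 (Fin.ext e)), if_neg h2, add_zero]

/-- the base word -/
def w0 (m n : ℕ) : Fin (m + n) → Bool := fun a => decide (m ≤ a.val)

/-- shuffles -/
def IsSh (m n : ℕ) (w : Fin (m + n) → Bool) : Prop :=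
  ∃ s : Equiv.Perm (Fin (m + n)), w0 m n ∘ s = w

theorem IsSh.swap {m n : ℕ} {w} (hw : IsSh m n w) (l h) : IsSh m n (w ∘ ss l h) := by
  obtain ⟨s, rfl⟩ := hw
  exact ⟨(ss l h).trans s, rfl⟩

theorem IsSh.zero (m n : ℕ) : IsSh m n (w0 m n) := ⟨1, rfl⟩

theorem IsSh.card {m n : ℕ} {w} (hw : IsSh m n w) :
    (Finset.univ.filter (fun a => w a = false)).card = m := by
  obtain ⟨s, rfl⟩ := hw
  have : (Finset.univ.filter (fun a => (w0 m n ∘ s) a = false)).card = 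
    (Finset.univ.filter (fun a => w0 m n a = false)).card := by
    refine Finset.card_equiv s (fun a => ?_)
    simp
  rw [this]
  have : Finset.univ.filter (fun a => w0 m n a = false) = 
    Finset.univ.map (Fin.castAddEmb n (n := m)) := by
    ext a
    simp only [w0, Finset.mem_filter, Finset.mem_univ, true_and, Finset.mem_map,
      decide_eq_false_iff_not, not_le]
    constructor
    · intro h; exact ⟨⟨a, h⟩, by ext; simp⟩
    · rintro ⟨b, rfl⟩; simp
  rw [this]; simp

theorem no_desc {m n : ℕ} {w} (hw : IsSh m n w) (hd : ∀ l h, ¬ Desc w l h) : w = w0 m n := by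
  have mono : ∀ (j : ℕ) (a : ℕ) (h : a + j < m + n), w ⟨a, by omega⟩ = true → w ⟨a + j, h⟩ = true := by
    intro j
    induction j with
    | zero => intro a h h1; exact h1
    | succ j ih =>
      intro a h h1
      have h2 := ih a (by omega) h1
      by_contra h3
      exact hd (a + j) h ⟨h2, Bool.eq_false_iff.2 h3⟩
  have mono' : ∀ a b : Fin (m + n), a ≤ b → w a = true → w b = true := by
    intro a b hab h
    have := mono (b.val - a.val) a.val (by omega) h
    have e : (⟨a.val + (b.val - a.val), by omega⟩ : Fin (m + n)) = b := by
      ext; simp; omega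
    rwa [e] at this
  have hc := hw.card
  ext a
  by_cases h : w a = true
  · have : (Finset.univ.filter (fun a => w a = false)) ⊆ Finset.univ.filter (fun b => b < a) := by
      intro b hb
      simp only [Finset.mem_filter, Finset.mem_univ, true_and] at hb ⊢
      by_contra h'
      have := mono' a b (not_lt.1 h') h
      simp_all
    have h2 := Finset.card_le_card this
    rw [hc] at h2
    have h3 : (Finset.univ.filter (fun b => b < a)).card = a.val := by
      rw [show Finset.univ.filter (fun b => b < a) = Finset.Iio a by ext; simp, Fin.card_Iio]
    rw [h, w0]; simp; omega
  · have : Finset.univ.filter (fun b => b ≤ a) ⊆ (Finset.univ.filter (fun a => w a = false)) := by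
      intro b hb
      simp only [Finset.mem_filter, Finset.mem_univ, true_and] at hb ⊢
      by_contra h'
      exact h (mono' b a hb (by simpa using h'))
    have h2 := Finset.card_le_card this
    rw [hc] at h2
    have h3 : (Finset.univ.filter (fun b => b ≤ a)).card = a.val + 1 := by
      rw [show Finset.univ.filter (fun b => b ≤ a) = Finset.Iic a by ext; simp, Fin.card_Iic]
    rw [w0, Bool.eq_false_iff.2 h]; simp; omega

end Words

section TW

variable {k : Type} [Field k] {I : Type} [Fintype I] [DecidableEq I] (C : CartanDatum k I)
variable {N : ℕ}

open Classical in
/-- the element attached to a shuffle -/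
noncomputable def tw (w : Fin N → Bool) : Alg C N :=
  if hd : ∃ l, ∃ h : l + 1 < N, Desc w l h then
    tw (w ∘ ss hd.choose hd.choose_spec.choose) * Tt C hd.choose hd.choose_spec.choose
  else 1
termination_by wt w
decreasing_by
  have := wt_desc w _ _ hd.choose_spec.choose_spec
  omega

theorem tw_none (w : Fin N → Bool) (h : ∀ l h, ¬ Desc w l h) : tw C w = 1 := by
  rw [tw, dif_neg]
  rintro ⟨l, h', h''⟩
  exact h l h' h''

theorem tw_desc (w : Fin N → Bool) (l : ℕ) (h : l + 1 < N) (hd : Desc w l h) :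
    tw C w = tw C (w ∘ ss l h) * Tt C l h := by
  induction hw : wt w using Nat.strong_induction_on generalizing w l with
  | _ W ih =>
  have hd' : ∃ l, ∃ h : l + 1 < N, Desc w l h := ⟨l, h, hd⟩
  have key : ∃ r, ∃ h' : r + 1 < N, Desc w r h' ∧ tw C w = tw C (w ∘ ss r h') * Tt C r h' :=
    ⟨_, _, hd'.choose_spec.choose_spec, by rw [tw, dif_pos hd']⟩
  obtain ⟨r, h', hr, e⟩ := key
  by_cases hlr : r = l
  · subst hlr; exact e
  have hfar : l + 1 < r ∨ r + 1 < l := by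
    by_contra hcon
    have : r = l + 1 ∨ l = r + 1 := by omega
    rcases this with rfl | rfl
    · have := hr.1; have := hd.2; simp_all
    · have := hr.2; have := hd.1; simp_all
  have d1 : Desc (w ∘ ss r h') l h := by
    refine ⟨?_, ?_⟩
    · rw [Function.comp_apply, ss_ne _ _ _ (by dsimp only; omega) (by dsimp only; omega)]; exact hd.1
    · rw [Function.comp_apply, ss_ne _ _ _ (by dsimp only; omega) (by dsimp only; omega)]; exact hd.2
  have d2 : Desc (w ∘ ss l h) r h' := by
    refine ⟨?_, ?_⟩
    · rw [Function.comp_apply, ss_ne _ _ _ (by dsimp only; omega) (by dsimp only; omega)]; exact hr.1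
    · rw [Function.comp_apply, ss_ne _ _ _ (by dsimp only; omega) (by dsimp only; omega)]; exact hr.2
  have q1 := wt_desc w r h' hr
  have q2 := wt_desc w l h hd
  have e1 := ih _ (by omega) (w ∘ ss r h') l h d1 rfl
  have e2 := ih _ (by omega) (w ∘ ss l h) r h' d2 rfl
  rw [e, e1, e2, ss_comm w l h r h' hfar, mul_assoc, mul_assoc]
  congr 1
  exact (algData C N).tautau l h r h' hfar

theorem tw_asc (w : Fin N → Bool) (l : ℕ) (h : l + 1 < N)
    (h1 : w ⟨l, Nat.lt_of_succ_lt h⟩ = false) (h2 : w ⟨l + 1, h⟩ = true) :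
    tw C w * Tt C l h = tw C (w ∘ ss l h) := by
  rw [tw_desc C (w ∘ ss l h) l h ⟨by simp [h2], by simp [h1]⟩, ss_ss]

variable (N) in
/-- The subalgebra generated by the x and e. -/
def PolA : Subalgebra k (Alg C N) :=
  Algebra.adjoin k (Set.range (Xx C (n := N)) ∪ Set.range (Ee C (n := N)))

theorem PolA_x (a : Fin N) : Xx C a ∈ PolA C N := Algebra.subset_adjoin (Or.inl ⟨a, rfl⟩)
theorem PolA_e (ν : Fin N → I) : Ee C ν ∈ PolA C N := Algebra.subset_adjoin (Or.inr ⟨ν, rfl⟩)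

theorem sum_e (z : Alg C N) : z = ∑ ν, z * Ee C ν := by
  have := (algData C N).esum
  change ∑ ν, Ee C ν = 1 at this
  rw [← Finset.mul_sum, this, mul_one]

theorem PolA_of {z : Alg C N} (h : ∀ ν, z * Ee C ν ∈ PolA C N) : z ∈ PolA C N := by
  rw [sum_e C z]
  exact Subalgebra.sum_mem _ fun ν _ => h ν

theorem PolA_Qel {i j : I} {u v : Alg C N} (hu : u ∈ PolA C N) (hv : v ∈ PolA C N) :
    Qel C i j u v ∈ PolA C N := by
  have := map_Qel C (A := PolA C N) (B := Alg C N) (PolA C N).val i j ⟨u, hu⟩ ⟨v, hv⟩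
  change Qel C i j ((PolA C N).val ⟨u, hu⟩) ((PolA C N).val ⟨v, hv⟩) ∈ _
  rw [← this]; exact Subtype.prop _

theorem PolA_Qdiff {i j : I} {u v w : Alg C N} (hu : u ∈ PolA C N) (hv : v ∈ PolA C N)
    (hw : w ∈ PolA C N) : Qdiff C i j u v w ∈ PolA C N := by
  have := map_Qdiff C (A := PolA C N) (B := Alg C N) (PolA C N).val i j ⟨u, hu⟩ ⟨v, hv⟩ ⟨w, hw⟩
  change Qdiff C i j ((PolA C N).val ⟨u, hu⟩) ((PolA C N).val ⟨v, hv⟩)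
    ((PolA C N).val ⟨w, hw⟩) ∈ _
  rw [← this]; exact Subtype.prop _

theorem PolA_sq (l h) : Tt C (n := N) l h * Tt C l h ∈ PolA C N := by
  apply PolA_of
  intro ν
  rw [← pow_two]
  have := (algData C N).tausq l h ν
  change Tt C l h ^ 2 * Ee C ν = _ at this
  rw [this]
  exact mul_mem (PolA_Qel C (PolA_x C _) (PolA_x C _)) (PolA_e C _)

theorem PolA_taux (l h) (a : Fin N) : Tt C (n := N) l h * Xx C a - Xx C (ss l h a) * Tt C l h
    ∈ PolA C N := by
  apply PolA_of
  intro ν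
  have := (algData C N).taux l h a ν
  change (Tt C (n := N) l h * Xx C a - Xx C (ss l h a) * Tt C l h) * Ee C ν = _ at this
  rw [this]
  have := PolA_e C ν
  split_ifs
  · exact neg_mem this
  · exact this
  · exact zero_mem _

theorem PolA_braid (l : ℕ) (h : l + 2 < N) :
    Tt C (l + 1) h * Tt C l (Nat.lt_of_succ_lt h) * Tt C (l + 1) h -
    Tt C l (Nat.lt_of_succ_lt h) * Tt C (l + 1) h * Tt C l (Nat.lt_of_succ_lt h) ∈ PolA C N := by
  apply PolA_of
  intro ν
  have := (algData C N).braid l h ν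
  change (Tt C (l + 1) h * Tt C l (Nat.lt_of_succ_lt h) * Tt C (l + 1) h -
    Tt C l (Nat.lt_of_succ_lt h) * Tt C (l + 1) h * Tt C l (Nat.lt_of_succ_lt h)) * Ee C ν = _ at this
  rw [this]
  split_ifs
  · exact mul_mem (PolA_Qdiff C (PolA_x C _) (PolA_x C _) (PolA_x C _)) (PolA_e C _)
  · exact zero_mem _

end TW

section Span

variable {k : Type} [Field k] {I : Type} [Fintype I] [DecidableEq I] (C : CartanDatum k I)
variable (m n : ℕ)

/-- The filtration. -/
def Ms (j : ℕ) : Submodule k (Alg C (m + n)) :=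
  Submodule.span k {z | ∃ s w, IsSh m n w ∧ wt w ≤ j ∧ z = iT C m n s * tw C w}

variable {m n}

theorem Ms_mono {i j : ℕ} (h : i ≤ j) : Ms C m n i ≤ Ms C m n j := by
  apply Submodule.span_mono
  rintro z ⟨s, w, h1, h2, rfl⟩
  exact ⟨s, w, h1, h2.trans h, rfl⟩

theorem Ms_left {j : ℕ} (s) {z} (hz : z ∈ Ms C m n j) : iT C m n s * z ∈ Ms C m n j := by
  induction hz using Submodule.span_induction with
  | mem z hz =>
    obtain ⟨s', w, h1, h2, rfl⟩ := hz
    rw [← mul_assoc, ← map_mul]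
    exact Submodule.subset_span ⟨_, w, h1, h2, rfl⟩
  | zero => simp
  | add x y _ _ hx hy => rw [mul_add]; exact add_mem hx hy
  | smul c x _ hx => rw [mul_smul_comm]; exact Submodule.smul_mem _ _ hx

theorem Ms_tw {w} (hw : IsSh m n w) : tw C w ∈ Ms C m n (wt w) :=
  Submodule.subset_span ⟨1, w, hw, le_rfl, by simp⟩

theorem Ms_right {i j : ℕ} {g z : Alg C (m + n)}
    (h : ∀ w, IsSh m n w → wt w ≤ i → tw C w * g ∈ Ms C m n j) (hz : z ∈ Ms C m n i) :
    z * g ∈ Ms C m n j := by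
  induction hz using Submodule.span_induction with
  | mem z hz =>
    obtain ⟨s', w, h1, h2, rfl⟩ := hz
    rw [mul_assoc]
    exact Ms_left C _ (h w h1 h2)
  | zero => simp
  | add x y _ _ hx hy => rw [add_mul]; exact add_mem hx hy
  | smul c x _ hx => rw [smul_mul_assoc]; exact Submodule.smul_mem _ _ hx

theorem Ms_pol {i : ℕ} 
    (hx : ∀ w, IsSh m n w → wt w ≤ i → ∀ a, tw C w * Xx C a ∈ Ms C m n (wt w))
    (he : ∀ w, IsSh m n w → wt w ≤ i → ∀ a, tw C w * Ee C a ∈ Ms C m n (wt w))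
    {p : Alg C (m + n)} (hp : p ∈ PolA C (m + n)) : 
    ∀ z, z ∈ Ms C m n i → z * p ∈ Ms C m n i := by
  unfold PolA at hp
  induction hp using Algebra.adjoin_induction with
  | mem x h =>
    intro z hz
    rcases h with ⟨a, rfl⟩ | ⟨ν, rfl⟩
    · exact Ms_right C (fun w h1 h2 => Ms_mono C h2 (hx w h1 h2 a)) hz
    · exact Ms_right C (fun w h1 h2 => Ms_mono C h2 (he w h1 h2 ν)) hz
  | algebraMap c => 
    intro z hz
    rw [← Algebra.commutes, ← Algebra.smul_def]; exact Submodule.smul_mem _ _ hz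
  | add x y _ _ hx hy => intro z hz; rw [mul_add]; exact add_mem (hx z hz) (hy z hz)
  | mul x y _ _ hx hy => intro z hz; rw [← mul_assoc]; exact hy _ (hx z hz)

theorem iT_left (a : Alg C m) : iT C m n (a ⊗ₜ 1) = iL C m n a := by
  rw [iT_tmul, map_one, mul_one]
theorem iT_right (a : Alg C n) : iT C m n (1 ⊗ₜ a) = iR C m n a := by
  rw [iT_tmul, map_one, one_mul]

/-- The inductive claim. -/
def Claim (w : Fin (m + n) → Bool) : Prop :=
  (∀ a, tw C w * Xx C a ∈ Ms C m n (wt w)) ∧ (∀ a, tw C w * Ee C a ∈ Ms C m n (wt w)) ∧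
  (∀ l h, tw C w * Tt C l h ∈ Ms C m n (wt w + 1)) ∧
  (∀ l h, w ⟨l, Nat.lt_of_succ_lt h⟩ = w ⟨l + 1, h⟩ → tw C w * Tt C l h ∈ Ms C m n (wt w))

theorem claim (w : Fin (m + n) → Bool) (hw : IsSh m n w) : Claim C w := by
  induction hW : wt w using Nat.strong_induction_on generalizing w with
  | _ W ih =>
  subst hW
  have Rx : ∀ j, j < wt w → ∀ z, z ∈ Ms C m n j → ∀ a, z * Xx C a ∈ Ms C m n j :=
    fun j hj z hz a => Ms_right C 
      (fun v hv hv' => Ms_mono C hv' ((ih (wt v) (by omega) v hv rfl).1 a)) hz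
  have Re : ∀ j, j < wt w → ∀ z, z ∈ Ms C m n j → ∀ a, z * Ee C a ∈ Ms C m n j :=
    fun j hj z hz a => Ms_right C 
      (fun v hv hv' => Ms_mono C hv' ((ih (wt v) (by omega) v hv rfl).2.1 a)) hz
  have Rt : ∀ j, j < wt w → ∀ z, z ∈ Ms C m n j → ∀ l h, z * Tt C l h ∈ Ms C m n (j + 1) :=
    fun j hj z hz l h => Ms_right C 
      (fun v hv hv' => Ms_mono C (by omega) ((ih (wt v) (by omega) v hv rfl).2.2.1 l h)) hz
  have Rp : ∀ j, j < wt w → ∀ z, z ∈ Ms C m n j → ∀ p ∈ PolA C (m + n), z * p ∈ Ms C m n j :=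
    fun j hj z hz p hp => Ms_pol C 
      (fun v hv hv' a => (ih (wt v) (by omega) v hv rfl).1 a)
      (fun v hv hv' a => (ih (wt v) (by omega) v hv rfl).2.1 a) hp z hz
  have C4 : ∀ l h, w ⟨l, Nat.lt_of_succ_lt h⟩ = w ⟨l + 1, h⟩ → tw C w * Tt C l h ∈ Ms C m n (wt w) := by
    intro l h hl
    by_cases hd : ∃ r, ∃ h : r + 1 < m + n, Desc w r h
    · obtain ⟨r, h', hr⟩ := hd
      have q1 := wt_desc w r h' hr
      have hw' := hw.swap r h'
      have E1 := tw_desc C w r h' hr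
      have hne : r ≠ l := by
        rintro rfl
        have := hr.1; have := hr.2; simp_all
      by_cases hfar : r + 1 < l ∨ l + 1 < r
      · have e := (algData C (m + n)).tautau r h' l h hfar
        change Tt C r h' * Tt C l h = Tt C l h * Tt C r h' at e
        rw [E1, mul_assoc, e, ← mul_assoc, ← q1]
        apply Rt _ (by omega)
        refine (ih (wt (w ∘ ss r h')) (by omega) _ hw' rfl).2.2.2 l h ?_
        rw [Function.comp_apply, Function.comp_apply, ss_ne _ _ _ (by dsimp only; omega) (by dsimp only; omega),
          ss_ne _ _ _ (by dsimp only; omega) (by dsimp only; omega), hl]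
      · have : r = l + 1 ∨ l = r + 1 := by omega
        rcases this with rfl | rfl
        · have a1 : w ⟨l + 1, Nat.lt_of_succ_lt h'⟩ = true := hr.1
          have a2 : w ⟨l + 2, h'⟩ = false := hr.2
          have a0 : w ⟨l, Nat.lt_of_succ_lt (Nat.lt_of_succ_lt h')⟩ = true := hl.trans a1
          have d2 : Desc (w ∘ ss (l + 1) h') l h := by
            refine ⟨?_, ?_⟩
            · rw [Function.comp_apply, ss_ne _ _ _ (by dsimp only; omega) (by dsimp only; omega), a0]
            · rw [Function.comp_apply, ss_left, a2]
          have q2 := wt_desc _ l h d2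
          have E2 := tw_desc C _ l h d2
          have hw'' := hw'.swap l h
          set v := (w ∘ ss (l + 1) h') ∘ ss l h with hv
          have v1 : v ⟨l + 1, Nat.lt_of_succ_lt h'⟩ = true := by
            rw [hv, Function.comp_apply, ss_right, Function.comp_apply,
              ss_ne _ _ _ (by dsimp only; omega) (by dsimp only; omega), a0]
          have v2 : v ⟨l + 2, h'⟩ = true := by
            rw [hv, Function.comp_apply, ss_ne _ _ _ (by dsimp only; omega) (by dsimp only; omega), Function.comp_apply,
              ss_right, a1]
          have b := PolA_braid C l h'
          have e : tw C w * Tt C l h = tw C v * Tt C (l + 1) h' * Tt C l h * Tt C (l + 1) h' -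
            tw C v * (Tt C (l + 1) h' * Tt C l (Nat.lt_of_succ_lt h') * Tt C (l + 1) h' -
            Tt C l (Nat.lt_of_succ_lt h') * Tt C (l + 1) h' * Tt C l (Nat.lt_of_succ_lt h')) := by
            rw [E1, E2]; simp only [mul_sub, mul_assoc]; abel
          rw [e]
          refine sub_mem ?_ (Ms_mono C (by omega) (Rp (wt v) (by omega) _ (Ms_tw C hw'') _ b))
          have := (ih (wt v) (by omega) v hw'' rfl).2.2.2 (l + 1) h' (v1.trans v2.symm)
          exact Ms_mono C (by omega) 
            (Rt (wt v + 1) (by omega) _ (Rt (wt v) (by omega) _ this l h) (l + 1) h')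
        · have a0 : w ⟨r, Nat.lt_of_succ_lt h'⟩ = true := hr.1
          have a1 : w ⟨r + 1, h'⟩ = false := hr.2
          have a2 : w ⟨r + 2, h⟩ = false := hl.symm.trans a1
          have d2 : Desc (w ∘ ss r h') (r + 1) h := by
            refine ⟨?_, ?_⟩
            · rw [Function.comp_apply, ss_right, a0]
            · rw [Function.comp_apply, ss_ne _ _ _ (by dsimp only; omega) (by dsimp only; omega), a2]
          have q2 := wt_desc _ (r + 1) h d2
          have E2 := tw_desc C _ (r + 1) h d2
          have hw'' := hw'.swap (r + 1) h
          set v := (w ∘ ss r h') ∘ ss (r + 1) h with hv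
          have v1 : v ⟨r, Nat.lt_of_succ_lt h'⟩ = false := by
            rw [hv, Function.comp_apply, ss_ne _ _ _ (by dsimp only; omega) (by dsimp only; omega),
              Function.comp_apply, ss_left, a1]
          have v2 : v ⟨r + 1, h'⟩ = false := by
            rw [hv, Function.comp_apply, ss_left, Function.comp_apply,
              ss_ne _ _ _ (by dsimp only; omega) (by dsimp only; omega), a2]
          have b := PolA_braid C r h
          have e : tw C w * Tt C (r + 1) h = tw C v * Tt C r h' * Tt C (r + 1) h * Tt C r h' +
            tw C v * (Tt C (r + 1) h * Tt C r (Nat.lt_of_succ_lt h) * Tt C (r + 1) h -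
            Tt C r (Nat.lt_of_succ_lt h) * Tt C (r + 1) h * Tt C r (Nat.lt_of_succ_lt h)) := by
            rw [E1, E2]; simp only [mul_sub, mul_assoc]; abel
          rw [e]
          refine add_mem ?_ (Ms_mono C (by omega) (Rp (wt v) (by omega) _ (Ms_tw C hw'') _ b))
          have := (ih (wt v) (by omega) v hw'' rfl).2.2.2 r h' (v1.trans v2.symm)
          exact Ms_mono C (by omega) 
            (Rt (wt v + 1) (by omega) _ (Rt (wt v) (by omega) _ this (r + 1) h) r h')
    · have hd' : ∀ l h, ¬ Desc w l h := fun l h h' => hd ⟨l, h, h'⟩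
      have e0 := no_desc hw hd'
      rw [tw_none C w hd', one_mul]
      have one : (1 : Alg C (m + n)) ∈ Ms C m n (wt w) := by
        rw [← tw_none C w hd']; exact Ms_tw C hw
      by_cases hm : l + 1 < m
      · have := Ms_left C (Tt C l hm ⊗ₜ 1) one
        rwa [mul_one, iT_left, iL_t] at this
      · by_cases hm' : m ≤ l
        · have := Ms_left C (1 ⊗ₜ Tt C (l - m) (by omega)) one
          rw [mul_one, iT_right, iR_t, Tt_congr _ (show m + (l - m) = l by omega)] at this
          exact this
        · exfalso
          rw [e0] at hl
          simp only [w0, decide_eq_decide] at hl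
          omega
  refine ⟨?_, ?_, ?_, C4⟩
  · intro a
    by_cases hd : ∃ r, ∃ h : r + 1 < m + n, Desc w r h
    · obtain ⟨r, h', hr⟩ := hd
      have q1 := wt_desc w r h' hr
      have hw' := hw.swap r h'
      have E1 := tw_desc C w r h' hr
      have e : tw C w * Xx C a = tw C (w ∘ ss r h') * Xx C (ss r h' a) * Tt C r h' + 
        tw C (w ∘ ss r h') * (Tt C r h' * Xx C a - Xx C (ss r h' a) * Tt C r h') := by
        rw [E1]; simp only [mul_sub, mul_assoc]; abel
      rw [e]
      refine add_mem ?_ ?_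
      · rw [← q1]
        exact Rt _ (by omega) _ (Rx _ (by omega) _ (Ms_tw C hw') _) _ _
      · exact Ms_mono C (by omega) (Rp (wt (w ∘ ss r h')) (by omega) _ (Ms_tw C hw') _ (PolA_taux C r h' a))
    · have hd' : ∀ l h, ¬ Desc w l h := fun l h h' => hd ⟨l, h, h'⟩
      rw [tw_none C w hd', one_mul]
      have one : (1 : Alg C (m + n)) ∈ Ms C m n (wt w) := by
        rw [← tw_none C w hd']; exact Ms_tw C hw
      refine Fin.addCases (fun b => ?_) (fun b => ?_) a
      · have := Ms_left C (Xx C b ⊗ₜ 1) one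
        rwa [mul_one, iT_left, iL_x] at this
      · have := Ms_left C (1 ⊗ₜ Xx C b) one
        rwa [mul_one, iT_right, iR_x] at this
  · intro ν
    by_cases hd : ∃ r, ∃ h : r + 1 < m + n, Desc w r h
    · obtain ⟨r, h', hr⟩ := hd
      have q1 := wt_desc w r h' hr
      have hw' := hw.swap r h'
      have E1 := tw_desc C w r h' hr
      have e := (algData C (m + n)).taue r h' ν
      change Tt C r h' * Ee C ν = Ee C (ν ∘ ss r h') * Tt C r h' at e
      rw [E1, mul_assoc, e, ← mul_assoc, ← q1]
      exact Rt _ (by omega) _ (Re _ (by omega) _ (Ms_tw C hw') _) _ _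
    · have hd' : ∀ l h, ¬ Desc w l h := fun l h h' => hd ⟨l, h, h'⟩
      rw [tw_none C w hd', one_mul]
      have one : (1 : Alg C (m + n)) ∈ Ms C m n (wt w) := by
        rw [← tw_none C w hd']; exact Ms_tw C hw
      have := Ms_left C (Ee C (fun i => ν (Fin.castAdd n i)) ⊗ₜ Ee C (fun i => ν (Fin.natAdd m i))) one
      rwa [mul_one, iT_e, Fin.append_castAdd_natAdd] at this
  · intro l h
    cases h1 : w ⟨l, Nat.lt_of_succ_lt h⟩ <;> cases h2 : w ⟨l + 1, h⟩
    · exact Ms_mono C (by omega) (C4 l h (h1.trans h2.symm))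
    · rw [tw_asc C w l h h1 h2]
      have hd : Desc (w ∘ ss l h) l h := ⟨by simp [h2], by simp [h1]⟩
      have := wt_desc _ l h hd
      rw [ss_ss] at this
      rw [this]
      exact Ms_tw C (hw.swap l h)
    · have hd : Desc w l h := ⟨h1, h2⟩
      have := wt_desc _ l h hd
      rw [tw_desc C w l h hd, mul_assoc]
      exact Ms_mono C (by omega) (Rp (wt (w ∘ ss l h)) (by omega) _ (Ms_tw C (hw.swap l h)) _ (PolA_sq C l h))
    · exact Ms_mono C (by omega) (C4 l h (h1.trans h2.symm))

variable (m n) in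
/-- All products. -/
theorem span_tw : Submodule.span k {z | ∃ s w, IsSh m n w ∧ z = iT C m n s * tw C w} = ⊤ := by
  set S := Submodule.span k {z | ∃ s w, IsSh m n w ∧ z = iT C m n s * tw C w} with hS
  have hMS : ∀ j, Ms C m n j ≤ S := by
    intro j
    apply Submodule.span_mono
    rintro z ⟨s, w, h1, h2, rfl⟩
    exact ⟨s, w, h1, rfl⟩
  have hleft : ∀ s z, z ∈ S → iT C m n s * z ∈ S := by
    intro s z hz
    induction hz using Submodule.span_induction with
    | mem z hz =>
      obtain ⟨s', w, h1, rfl⟩ := hz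
      rw [← mul_assoc, ← map_mul]
      exact Submodule.subset_span ⟨_, w, h1, rfl⟩
    | zero => simp
    | add x y _ _ hx hy => rw [mul_add]; exact add_mem hx hy
    | smul c x _ hx => rw [mul_smul_comm]; exact Submodule.smul_mem _ _ hx
  have hright : ∀ g, (∀ w, IsSh m n w → tw C w * g ∈ S) → ∀ z, z ∈ S → z * g ∈ S := by
    intro g hg z hz
    induction hz using Submodule.span_induction with
    | mem z hz =>
      obtain ⟨s', w, h1, rfl⟩ := hz
      rw [mul_assoc]
      exact hleft _ _ (hg w h1)
    | zero => simp
    | add x y _ _ hx hy => rw [add_mul]; exact add_mem hx hy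
    | smul c x _ hx => rw [smul_mul_assoc]; exact Submodule.smul_mem _ _ hx
  have h1 : (1 : Alg C (m + n)) ∈ S := by
    refine Submodule.subset_span ⟨1, w0 m n, IsSh.zero m n, ?_⟩
    rw [tw_none, map_one, one_mul]
    intro l h hd
    have e1 := hd.1
    have e2 := hd.2
    simp only [w0, decide_eq_true_eq, decide_eq_false_iff_not] at e1 e2
    omega
  let R : Subalgebra k (Alg C (m + n)) :=
    { carrier := {r | ∀ z, z ∈ S → z * r ∈ S}
      mul_mem' := fun {a b} ha hb z hz => by rw [← mul_assoc]; exact hb _ (ha z hz)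
      add_mem' := fun {a b} ha hb z hz => by rw [mul_add]; exact add_mem (ha z hz) (hb z hz)
      algebraMap_mem' := fun c z hz => by
        rw [← Algebra.commutes, ← Algebra.smul_def]; exact Submodule.smul_mem _ _ hz }
  rw [eq_top_iff]
  intro r _
  have : r ∈ R := by
    apply alg_top C R
    · intro ν
      exact hright _ fun w hw => hMS _ ((claim C w hw).2.1 ν)
    · intro ν
      exact hright _ fun w hw => hMS _ ((claim C w hw).1 ν)
    · intro l h
      exact hright _ fun w hw => hMS _ ((claim C w hw).2.2.1 l h)
  have := this 1 h1
  rwa [one_mul] at this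

end Span

end KLR


namespace KLR

open scoped TensorProduct

section Rep2

variable {k : Type} [Field k] {I : Type} [Fintype I] [DecidableEq I] {C : CartanDatum k I}
variable {K : Type} [Field K] [Algebra k K]

/-- Intertwiners are detected on generators. -/
theorem intertw {N : ℕ} {V V' : Type} [AddCommGroup V] [Module k V] [AddCommGroup V'] [Module k V']
    (φ : Alg C N →ₐ[k] Module.End k V) (φ' : Alg C N →ₐ[k] Module.End k V') (T : V →ₗ[k] V')
    (he : ∀ ν v, T (φ (Ee C ν) v) = φ' (Ee C ν) (T v))
    (hx : ∀ a v, T (φ (Xx C a) v) = φ' (Xx C a) (T v))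
    (ht : ∀ l h v, T (φ (Tt C l h) v) = φ' (Tt C l h) (T v)) (r : Alg C N) (v : V) :
    T (φ r v) = φ' r (T v) := by
  let R : Subalgebra k (Alg C N) :=
    { carrier := {r | ∀ v, T (φ r v) = φ' r (T v)}
      mul_mem' := fun {a b} ha hb v => by
        rw [map_mul, map_mul, Module.End.mul_apply, Module.End.mul_apply, ha, hb]
      add_mem' := fun {a b} ha hb v => by
        rw [map_add, map_add, LinearMap.add_apply, LinearMap.add_apply, map_add, ha, hb]
      algebraMap_mem' := fun c v => by
        rw [AlgHom.commutes, AlgHom.commutes, Module.algebraMap_end_apply,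
          Module.algebraMap_end_apply, map_smul] }
  exact alg_top C R he hx ht r v

namespace GData

variable {M : ℕ} (G : GData C K M)

/-- The representation. -/
noncomputable def rho (N : ℕ) : Alg C N →ₐ[k] Module.End k (Sp K N M) := (G.data N).lift C

theorem rho_e {N : ℕ} (ν : Fin N → I) : G.rho N (Ee C ν) = opD (fe K G.μ ν) := KData.lift_e C _ ν
theorem rho_x {N : ℕ} (a : Fin N) : G.rho N (Xx C a) = opD (G.fx a) := KData.lift_x C _ a
theorem rho_t {N : ℕ} (l h) : G.rho N (Tt C l h) =
  G.opT ⟨l, Nat.lt_of_succ_lt h⟩ ⟨l + 1, h⟩ := KData.lift_t C _ l h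

theorem rho_smul {N : ℕ} (r : Alg C N) (c : K) (f : Sp K N M) :
    G.rho N r (c • f) = c • G.rho N r f := by
  refine (intertw (G.rho N) (G.rho N) 
    (LinearMap.lsmul K (Sp K N M) c |>.restrictScalars k) ?_ ?_ ?_ r f).symm
  · intro ν v; ext σ; simp [rho_e, opD_apply]; try ring
  · intro ν v; ext σ; simp [rho_x, opD_apply]; ring
  · intro l h v; ext σ; simp [rho_t, opT_apply]; ring

theorem rho_single {N : ℕ} (r : Alg C N) (f : Sp K N M) (σ) :
    G.rho N r f σ = ∑ π, f π * G.rho N r (Pi.single π 1) σ := by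
  have : f = ∑ π, f π • Pi.single π (1 : K) := by
    ext τ; simp [Finset.sum_apply, Pi.single_apply]
  conv_lhs => rw [this]
  simp only [map_sum, rho_smul, Finset.sum_apply, Pi.smul_apply, smul_eq_mul]

variable {K' : Type} [Field K'] [Algebra k K']

/-- Base change of data. -/
def map (φ : K →ₐ[k] K') : GData C K' M where
  y p := φ (G.y p)
  μ := G.μ
  inj := φ.toRingHom.injective.comp G.inj
  gen p q h h' := by
    rw [← map_Qel]
    exact fun e => G.gen p q h h' (φ.toRingHom.injective (by rw [map_zero]; exact e))

theorem map_μ (φ : K →ₐ[k] K') : (G.map φ).μ = G.μ := rfl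
theorem map_y (φ : K →ₐ[k] K') (p) : (G.map φ).y p = φ (G.y p) := rfl

theorem map_ca (φ : K →ₐ[k] K') (p q) : (G.map φ).ca p q = φ (G.ca p q) := by
  by_cases h : G.μ p = G.μ q <;> simp [ca, map_μ, map_y, h]

theorem map_cp (φ : K →ₐ[k] K') (p q) : (G.map φ).cp p q = φ (G.cp p q) := by
  by_cases h : G.μ p = G.μ q 
  · simp [cp, map_μ, map_y, h]
  · simp [cp, map_μ, map_y, h, map_Qel]

theorem map_cc (φ : K →ₐ[k] K') (p q) : (G.map φ).cc p q = φ (G.cc p q) := by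
  unfold cc
  split_ifs 
  · simp
  · rw [map_cp]

theorem rho_map {N : ℕ} (φ : K →ₐ[k] K') (r : Alg C N) (f : Sp K N M) (σ) :
    (G.map φ).rho N r (fun τ => φ (f τ)) σ = φ (G.rho N r f σ) := by
  have := intertw (G.rho N) ((G.map φ).rho N) (φ.toLinearMap.compLeft (Fin N ↪ Fin M)) 
    ?_ ?_ ?_ r f
  · exact (congrFun this σ).symm
  · intro ν v; ext σ
    simp only [rho_e, opD_apply, LinearMap.compLeft_apply, Function.comp_apply, fe,
      AlgHom.toLinearMap_apply, map_mul]
    rw [map_μ]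
    by_cases h : G.μ ∘ σ = ν <;> simp [h]
  · intro ν v; ext σ
    simp [rho_x, opD_apply, LinearMap.compLeft_apply, fx, map]
  · intro l h v; ext σ
    simp [rho_t, opT_apply, LinearMap.compLeft_apply, map_ca, map_cc]

theorem slice {N m M' : ℕ} (G' : GData C K M') (j : Fin M' → Fin M) (hj : StrictMono j)
    (hy : ∀ p, G'.y p = G.y (j p)) (hμ : ∀ p, G'.μ p = G.μ (j p)) (o : Fin m → Fin N)
    (E : (Fin m ↪ Fin M') → (Fin N ↪ Fin M)) (hE : ∀ α a, E α (o a) = j (α a))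
    (hs : ∀ a b α, E (sw a b α) = sw (o a) (o b) (E α))
    (φ : Alg C m →ₐ[k] Module.End k (Sp K N M))
    (he : ∀ ν f σ, φ (Ee C ν) f σ = if G.μ ∘ σ ∘ o = ν then f σ else 0)
    (hx : ∀ a, φ (Xx C a) = opD (G.fx (o a)))
    (ht : ∀ l h, φ (Tt C l h) = G.opT (o ⟨l, Nat.lt_of_succ_lt h⟩) (o ⟨l + 1, h⟩))
    (r : Alg C m) (f : Sp K N M) (α) :
    φ r f (E α) = G'.rho m r (fun β => f (E β)) α := by
  have hca : ∀ p q, G'.ca p q = G.ca (j p) (j q) := by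
    intro p q; simp only [ca, hy, hμ]
  have hcc : ∀ p q, G'.cc p q = G.cc (j p) (j q) := by
    intro p q; simp only [cc, cp, hy, hμ, hj.lt_iff_lt]
  have := intertw φ (G'.rho m) (LinearMap.funLeft k K E) ?_ ?_ ?_ r f
  · exact congrFun this α
  · intro ν v; ext α
    have e1 : G.μ ∘ (E α) ∘ o = G'.μ ∘ α := by
      ext a; simp [hE, hμ]
    simp only [LinearMap.funLeft_apply, he, e1, rho_e, opD_apply, fe]
    split_ifs <;> simp
  · intro a v; ext α
    simp only [LinearMap.funLeft_apply, hx, rho_x, opD_apply, fx, hE, hy]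
  · intro l h v; ext α
    simp only [LinearMap.funLeft_apply, ht, rho_t, opT_apply, hE, hca, hcc, hs]

theorem rho_eb {N : ℕ} (o m : ℕ) (hN : o + m ≤ N) (ν : Fin m → I) (f : Sp K N M) (σ) :
    G.rho N ((algData C N).eb o m hN ν) f σ = if G.μ ∘ σ ∘ off o m hN = ν then f σ else 0 := by
  unfold KData.eb
  simp only [map_sum, apply_ite (G.rho N), map_zero]
  change (∑ κ : Fin N → I, if κ ∘ off o m hN = ν then G.rho N (Ee C κ) else 0) f σ = _
  simp only [rho_e]
  rw [LinearMap.sum_apply, Finset.sum_apply, Finset.sum_eq_single (G.μ ∘ σ)]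
  · have : ((G.μ ∘ ⇑σ) ∘ off o m hN = ν) ↔ (G.μ ∘ ⇑σ ∘ off o m hN = ν) := Iff.rfl
    simp only [this]
    split_ifs
    · simp [opD_apply, fe]
    · simp
  · intro κ _ hκ
    split_ifs
    · simp [opD_apply, fe, Ne.symm hκ]
    · simp
  · simp

end GData

section Blocks

variable {m n : ℕ}

/-- block sum of embeddings -/
def bs (α : Fin m ↪ Fin m) (β : Fin n ↪ Fin n) : Fin (m + n) ↪ Fin (m + n) where
  toFun := Fin.append (Fin.castAdd n ∘ α) (Fin.natAdd m ∘ β)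
  inj' := by
    intro a b
    refine Fin.addCases (fun a => ?_) (fun a => ?_) a <;>
      refine Fin.addCases (fun b => ?_) (fun b => ?_) b <;>
      intro h <;> simp only [Fin.append_left, Fin.append_right, Function.comp_apply] at h
    · rw [α.injective (Fin.castAdd_injective _ _ h)]
    · have := congrArg Fin.val h; simp at this; omega
    · have := congrArg Fin.val h; simp at this; omega
    · rw [β.injective (Fin.natAdd_injective _ _ h)]

theorem bs_left (α : Fin m ↪ Fin m) (β : Fin n ↪ Fin n) (a) :
    bs α β (Fin.castAdd n a) = Fin.castAdd n (α a) := by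
  change Fin.append _ _ _ = _
  simp
theorem bs_right (α : Fin m ↪ Fin m) (β : Fin n ↪ Fin n) (a) :
    bs α β (Fin.natAdd m a) = Fin.natAdd m (β a) := by
  change Fin.append _ _ _ = _
  simp

theorem w0_bs (α : Fin m ↪ Fin m) (β : Fin n ↪ Fin n) : w0 m n ∘ bs α β = w0 m n := by
  ext a
  refine Fin.addCases (fun a => ?_) (fun a => ?_) a
  · have := (α a).isLt
    have := a.isLt
    simp [bs_left, w0]
    omega
  · simp [bs_right, w0]

theorem bs_sw_left (α : Fin m ↪ Fin m) (β : Fin n ↪ Fin n) (a b : Fin m) :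
    bs (GData.sw a b α) β = GData.sw (Fin.castAdd n a) (Fin.castAdd n b) (bs α β) := by
  ext z
  congr 1
  refine Fin.addCases (fun z => ?_) (fun z => ?_) z
  · rw [bs_left, GData.sw_apply, GData.sw_apply, 
      Function.Injective.swap_apply (Fin.castAdd_injective m n), bs_left]
  · rw [bs_right, GData.sw_apply, Equiv.swap_apply_of_ne_of_ne, bs_right]
    · intro h; have := congrArg Fin.val h; simp at this; omega
    · intro h; have := congrArg Fin.val h; simp at this; omega

theorem bs_sw_right (α : Fin m ↪ Fin m) (β : Fin n ↪ Fin n) (a b : Fin n) :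
    bs α (GData.sw a b β) = GData.sw (Fin.natAdd m a) (Fin.natAdd m b) (bs α β) := by
  ext z
  congr 1
  refine Fin.addCases (fun z => ?_) (fun z => ?_) z
  · rw [bs_left, GData.sw_apply, Equiv.swap_apply_of_ne_of_ne, bs_left]
    · intro h; have := congrArg Fin.val h; simp at this; omega
    · intro h; have := congrArg Fin.val h; simp at this; omega
  · rw [bs_right, GData.sw_apply, GData.sw_apply, 
      Function.Injective.swap_apply (Fin.natAdd_injective n m), bs_right]

theorem bs_inj {α α' : Fin m ↪ Fin m} {β β' : Fin n ↪ Fin n} (h : bs α β = bs α' β') :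
    α = α' ∧ β = β' := by
  constructor
  · ext a
    have := DFunLike.congr_fun h (Fin.castAdd n a)
    rw [bs_left, bs_left] at this
    simpa [Fin.ext_iff] using this
  · ext a
    have := DFunLike.congr_fun h (Fin.natAdd m a)
    rw [bs_right, bs_right] at this
    simpa [Fin.ext_iff] using this

variable (G : GData C K (m + n)) (HL : GData C K m) (HR : GData C K n)

theorem slice_left (hy : ∀ p, HL.y p = G.y (Fin.castAdd n p)) 
    (hμ : ∀ p, HL.μ p = G.μ (Fin.castAdd n p)) (r : Alg C m) (f) (α : Fin m ↪ Fin m) 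
    (β : Fin n ↪ Fin n) :
    G.rho (m + n) (iL C m n r) f (bs α β) = HL.rho m r (fun α => f (bs α β)) α := by
  refine G.slice HL (Fin.castAdd n) (Fin.strictMono_castAdd n) hy hμ (Fin.castAdd n) (fun α => bs α β)
    (fun α a => bs_left _ _ _) (fun a b α => bs_sw_left _ _ _ _) 
    ((G.rho (m + n)).comp (iL C m n)) ?_ ?_ ?_ r f α
  · intro ν f σ
    rw [AlgHom.comp_apply, iL_e, G.rho_eb]
    have : off 0 m (by omega) = Fin.castAdd (n := m) n := by
      ext a; simp [off]
    rw [this]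
  · intro a
    rw [AlgHom.comp_apply, iL_x, G.rho_x]
  · intro l h
    rw [AlgHom.comp_apply, iL_t, G.rho_t]; rfl

theorem slice_right (hy : ∀ p, HR.y p = G.y (Fin.natAdd m p)) 
    (hμ : ∀ p, HR.μ p = G.μ (Fin.natAdd m p)) (r : Alg C n) (f) (α : Fin m ↪ Fin m) 
    (β : Fin n ↪ Fin n) :
    G.rho (m + n) (iR C m n r) f (bs α β) = HR.rho n r (fun β => f (bs α β)) β := by
  refine G.slice HR (Fin.natAdd m) (Fin.strictMono_natAdd m) hy hμ (Fin.natAdd m) (fun β => bs α β)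
    (fun α a => bs_right _ _ _) (fun a b α => bs_sw_right _ _ _ _) 
    ((G.rho (m + n)).comp (iR C m n)) ?_ ?_ ?_ r f β
  · intro ν f σ
    rw [AlgHom.comp_apply, iR_e, G.rho_eb]
    have : off m n (le_refl (m + n)) = (Fin.natAdd m : Fin n → Fin (m + n)) := by
      ext a; simp [off]
    rw [this]
  · intro a
    rw [AlgHom.comp_apply, iR_x, G.rho_x]
  · intro l h
    rw [AlgHom.comp_apply, iR_t, G.rho_t]; rfl

variable {G HL HR}

theorem rho_iT_tmul (hyL : ∀ p, HL.y p = G.y (Fin.castAdd n p)) 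
    (hμL : ∀ p, HL.μ p = G.μ (Fin.castAdd n p)) (hyR : ∀ p, HR.y p = G.y (Fin.natAdd m p)) 
    (hμR : ∀ p, HR.μ p = G.μ (Fin.natAdd m p)) (a : Alg C m) (b : Alg C n) (f) 
    (α : Fin m ↪ Fin m) (β : Fin n ↪ Fin n) :
    G.rho (m + n) (iT C m n (a ⊗ₜ b)) f (bs α β) = 
      HL.rho m a (fun α' => HR.rho n b (fun β' => f (bs α' β')) β) α := by
  rw [iT_tmul, map_mul, Module.End.mul_apply, slice_left G HL hyL hμL]
  simp only [slice_right G HR hyR hμR]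

/-- Locality. -/
theorem rho_iT_zero (hyL : ∀ p, HL.y p = G.y (Fin.castAdd n p)) 
    (hμL : ∀ p, HL.μ p = G.μ (Fin.castAdd n p)) (hyR : ∀ p, HR.y p = G.y (Fin.natAdd m p)) 
    (hμR : ∀ p, HR.μ p = G.μ (Fin.natAdd m p)) (s) (f : GData.Sp K (m + n) (m + n)) 
    (hf : ∀ α β, f (bs α β) = 0)
    (α : Fin m ↪ Fin m) (β : Fin n ↪ Fin n) :
    G.rho (m + n) (iT C m n s) f (bs α β) = 0 := by
  induction s with
  | zero => simp
  | add x y hx hy => rw [map_add, map_add, LinearMap.add_apply, Pi.add_apply, hx, hy, add_zero]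
  | tmul a b => 
    rw [rho_iT_tmul hyL hμL hyR hμR]
    simp only [hf]
    have e1 : (fun _ : Fin n ↪ Fin n => (0 : K)) = 0 := rfl
    simp only [e1, map_zero, Pi.zero_apply]
    have e2 : (fun _ : Fin m ↪ Fin m => (0 : K)) = 0 := rfl
    simp only [e2, map_zero, Pi.zero_apply]

theorem rho_iT_single (hyL : ∀ p, HL.y p = G.y (Fin.castAdd n p)) 
    (hμL : ∀ p, HL.μ p = G.μ (Fin.castAdd n p)) (hyR : ∀ p, HR.y p = G.y (Fin.natAdd m p)) 
    (hμR : ∀ p, HR.μ p = G.μ (Fin.natAdd m p)) (a : Alg C m) (b : Alg C n)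
    (α π : Fin m ↪ Fin m) (β π' : Fin n ↪ Fin n) :
    G.rho (m + n) (iT C m n (a ⊗ₜ b)) (Pi.single (bs π π') 1) (bs α β) = 
      HL.rho m a (Pi.single π 1) α * HR.rho n b (Pi.single π' 1) β := by
  rw [rho_iT_tmul hyL hμL hyR hμR]
  have : (fun α' : Fin m ↪ Fin m => HR.rho n b (fun β' => (Pi.single (bs π π') 1 : GData.Sp K (m + n) (m + n)) (bs α' β')) β)
    = (HR.rho n b (Pi.single π' 1) β) • (Pi.single π 1 : GData.Sp K m m) := by
    ext α'
    by_cases h : α' = π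
    · subst h
      simp only [Pi.smul_apply, Pi.single_eq_same, smul_eq_mul, mul_one]
      refine congrArg (fun F => HR.rho n b F β) ?_
      ext β'
      by_cases h' : β' = π'
      · subst h'; simp
      · rw [Pi.single_eq_of_ne h', Pi.single_eq_of_ne]
        exact fun h => h' (bs_inj h).2
    · simp only [Pi.smul_apply, Pi.single_eq_of_ne h, smul_zero]
      have e1 : (fun β' => (Pi.single (bs π π') 1 : GData.Sp K (m + n) (m + n)) (bs α' β')) = 0 := by
        ext β'
        rw [Pi.single_eq_of_ne]
        · rfl
        exact fun h'' => h (bs_inj h'').1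
      rw [e1, map_zero]; rfl
  rw [this, HL.rho_smul, Pi.smul_apply, smul_eq_mul, mul_comm]

end Blocks

section Tri

variable {m n : ℕ} (G : GData C K (m + n))

theorem wt_swap_le {N : ℕ} (w : Fin N → Bool) (l h) : wt (w ∘ ss l h) ≤ wt w + 1 := by
  cases h1 : w ⟨l, Nat.lt_of_succ_lt h⟩ <;> cases h2 : w ⟨l + 1, h⟩
  · have : w ∘ ss l h = w := by
      ext z; simp only [Function.comp_apply, Equiv.swap_apply_def]; split_ifs <;> simp_all
    rw [this]; omega
  · have hd : Desc (w ∘ ss l h) l h := ⟨by simp [h2], by simp [h1]⟩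
    have := wt_desc _ l h hd
    rw [ss_ss] at this
    omega
  · have := wt_desc w l h ⟨h1, h2⟩
    omega
  · have : w ∘ ss l h = w := by
      ext z; simp only [Function.comp_apply, Equiv.swap_apply_def]; split_ifs <;> simp_all
    rw [this]; omega

theorem tri (w : Fin (m + n) → Bool) (hw : IsSh m n w) :
    ∃ p : Equiv.Perm (Fin (m + n)), w0 m n ∘ p = w ∧ 
      ∀ σ : Fin (m + n) ↪ Fin (m + n), w0 m n ∘ σ = w0 m n → ∃ c : K, c ≠ 0 ∧ 
        ∀ f : GData.Sp K (m + n) (m + n), (∀ π : Fin (m + n) ↪ Fin (m + n), wt (w0 m n ∘ π) < wt w → f π = 0) →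
          G.rho (m + n) (tw C w) f σ = c * f (p.toEmbedding.trans σ) := by
  induction hW : wt w using Nat.strong_induction_on generalizing w with
  | _ W ih =>
  subst hW
  by_cases hd : ∃ r, ∃ h : r + 1 < m + n, Desc w r h
  · obtain ⟨r, h, hr⟩ := hd
    have q1 := wt_desc w r h hr
    obtain ⟨p, hp, H⟩ := ih _ (by omega) (w ∘ ss r h) (hw.swap r h) rfl
    refine ⟨(ss r h).trans p, ?_, ?_⟩
    · have := congrArg (· ∘ ss r h) hp
      simp only [ss_ss] at this
      exact this
    · intro σ hσ
      obtain ⟨c, hc, H'⟩ := H σ hσ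
      set π := p.toEmbedding.trans σ with hπ
      refine ⟨c * G.cc (π ⟨r, Nat.lt_of_succ_lt h⟩) (π ⟨r + 1, h⟩), 
        mul_ne_zero hc (G.cc_ne fun e => ?_), ?_⟩
      · have := π.injective e
        simp at this
      · intro f hf
        rw [tw_desc C w r h hr, map_mul, Module.End.mul_apply, H', GData.rho_t, GData.opT_apply]
        · have : f π = 0 := by
            apply hf
            have e : w0 m n ∘ π = w ∘ ss r h := by
              rw [← hp, hπ]
              ext z
              exact congrFun hσ (p z)  
            rw [e]; omega
          rw [this, mul_zero, zero_add, mul_assoc]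
          rfl
        · intro π' hπ'
          rw [GData.rho_t, GData.opT_apply, hf π' (by omega), hf, mul_zero, mul_zero, add_zero]
          have := wt_swap_le (w0 m n ∘ π') r h
          have e : w0 m n ∘ (GData.sw ⟨r, Nat.lt_of_succ_lt h⟩ ⟨r + 1, h⟩ π') = 
            (w0 m n ∘ π') ∘ ss r h := rfl
          rw [e]; omega
  · have hd' : ∀ l h, ¬ Desc w l h := fun l h h' => hd ⟨l, h, h'⟩
    refine ⟨1, (no_desc hw hd').symm, fun σ _ => ⟨1, one_ne_zero, fun f _ => ?_⟩⟩
    rw [tw_none C w hd', map_one, one_mul]; rfl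

end Tri

end Rep2

end KLR


namespace KLR

open scoped TensorProduct

section LinAlg

variable {k : Type} [Field k]

theorem joint_right {A V W X : Type} [AddCommGroup A] [Module k A] [AddCommGroup V] [Module k V]
    [AddCommGroup W] [Module k W] (c : X → A →ₗ[k] V) (hc : ∀ a, (∀ x, c x a = 0) → a = 0)
    (t : A ⊗[k] W) (ht : ∀ x, (c x).rTensor W t = 0) : t = 0 := by
  classical
  let b := Module.Basis.ofVectorSpace k W
  apply (TensorProduct.equivFinsuppOfBasisRight (M := A) b).injective
  rw [map_zero]
  ext i
  apply hc
  intro x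
  have : ∀ t : A ⊗[k] W, c x (TensorProduct.equivFinsuppOfBasisRight b t i) =
      TensorProduct.equivFinsuppOfBasisRight b ((c x).rTensor W t) i := by
    intro t
    induction t with
    | zero => simp
    | add x y hx hy => simp [hx, hy]
    | tmul a w =>
      simp
  rw [this, ht]; simp

theorem joint_left {A V W X : Type} [AddCommGroup A] [Module k A] [AddCommGroup V] [Module k V]
    [AddCommGroup W] [Module k W] (c : X → A →ₗ[k] V) (hc : ∀ a, (∀ x, c x a = 0) → a = 0)
    (t : W ⊗[k] A) (ht : ∀ x, (c x).lTensor W t = 0) : t = 0 := by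
  apply (TensorProduct.comm k W A).injective
  rw [map_zero]
  apply joint_right c hc
  intro x
  rw [← LinearMap.comm_comp_lTensor_comp_comm_eq]
  simp [ht]

theorem joint_both {A V B W X Y : Type} [AddCommGroup A] [Module k A] [AddCommGroup V] [Module k V]
    [AddCommGroup W] [Module k W] [AddCommGroup B] [Module k B]
    (c : X → A →ₗ[k] V) (hc : ∀ a, (∀ x, c x a = 0) → a = 0)
    (d : Y → B →ₗ[k] W) (hd : ∀ a, (∀ x, d x a = 0) → a = 0)
    (t : A ⊗[k] B) (ht : ∀ x y, TensorProduct.map (c x) (d y) t = 0) : t = 0 := by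
  refine joint_left d hd t fun y => joint_right c hc _ fun x => ?_
  rw [← LinearMap.comp_apply, LinearMap.rTensor_comp_lTensor, ht]

/-- extension of an injective renaming to rational functions -/
theorem exists_jj {m N : ℕ} (o : Fin m → Fin N) (ho : Function.Injective o) :
    ∃ j : KK k m →ₐ[k] KK k N, ∀ f : MvPolynomial (Fin m) k,
      j (algebraMap _ _ f) = algebraMap _ _ (MvPolynomial.rename o f) := by
  have hg : Function.Injective ((IsScalarTower.toAlgHom k (MvPolynomial (Fin N) k) (KK k N)).comp
      (MvPolynomial.rename o)) := by
    rw [AlgHom.coe_comp]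
    exact (IsFractionRing.injective _ (KK k N)).comp (MvPolynomial.rename_injective _ ho)
  refine ⟨IsFractionRing.liftAlgHom (A := MvPolynomial (Fin m) k) hg, fun f => ?_⟩
  rw [IsFractionRing.liftAlgHom_apply]
  exact IsFractionRing.lift_algebraMap (A := MvPolynomial (Fin m) k) (K := KK k m) hg f

variable (k) in
/-- left inclusion of rational functions -/
noncomputable def jL (m n : ℕ) : KK k m →ₐ[k] KK k (m + n) :=
  (exists_jj (k := k) (Fin.castAdd n) (Fin.castAdd_injective m n)).choose

variable (k) in
/-- right inclusion of rational functions -/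
noncomputable def jR (m n : ℕ) : KK k n →ₐ[k] KK k (m + n) :=
  (exists_jj (k := k) (Fin.natAdd m) (Fin.natAdd_injective n m)).choose

theorem jL_alg (m n : ℕ) (f : MvPolynomial (Fin m) k) :
    jL k m n (algebraMap _ _ f) = algebraMap _ _ (MvPolynomial.rename (Fin.castAdd n) f) :=
  (exists_jj (k := k) (Fin.castAdd n) (Fin.castAdd_injective m n)).choose_spec f

theorem jR_alg (m n : ℕ) (f : MvPolynomial (Fin n) k) :
    jR k m n (algebraMap _ _ f) = algebraMap _ _ (MvPolynomial.rename (Fin.natAdd m) f) :=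
  (exists_jj (k := k) (Fin.natAdd m) (Fin.natAdd_injective n m)).choose_spec f

theorem pol_inj (m n : ℕ) : Function.Injective (Algebra.TensorProduct.productMap
    (MvPolynomial.rename (R := k) (Fin.castAdd n : Fin m → Fin (m + n)))
    (MvPolynomial.rename (R := k) (Fin.natAdd m : Fin n → Fin (m + n)))) := by
  have : Algebra.TensorProduct.productMap
    (MvPolynomial.rename (R := k) (Fin.castAdd n : Fin m → Fin (m + n)))
    (MvPolynomial.rename (R := k) (Fin.natAdd m : Fin n → Fin (m + n))) =
    ((MvPolynomial.tensorEquivSum k (Fin m) (Fin n) k).trans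
      (MvPolynomial.renameEquiv k finSumFinEquiv)).toAlgHom := by
    ext i <;> simp
  rw [this]
  exact AlgEquiv.injective _

theorem frac_inj (m n : ℕ) :
    Function.Injective (Algebra.TensorProduct.productMap (jL k m n) (jR k m n)) := by
  rw [injective_iff_map_eq_zero]
  intro t ht
  let ψ := Algebra.TensorProduct.map
    (IsScalarTower.toAlgHom k (MvPolynomial (Fin m) k) (KK k m))
    (IsScalarTower.toAlgHom k (MvPolynomial (Fin n) k) (KK k n))
  have key : ∀ t : KK k m ⊗[k] KK k n, ∃ u t', IsUnit u ∧ u * t = ψ t' ∧ ∃ u', u = ψ u' := by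
    intro t
    induction t with
    | zero => exact ⟨1, 0, isUnit_one, by simp, 1, by simp⟩
    | add x y hx hy =>
      obtain ⟨u, x', hu, hx, u', hu'⟩ := hx
      obtain ⟨v, y', hv, hy, v', hv'⟩ := hy
      refine ⟨u * v, v' * x' + u' * y', hu.mul hv, ?_, u' * v', by rw [map_mul, hu', hv']⟩
      rw [map_add, map_mul, map_mul, ← hx, ← hy, ← hu', ← hv']
      ring
    | tmul a b =>
      obtain ⟨p, q, hq, rfl⟩ := IsFractionRing.div_surjective (A := MvPolynomial (Fin m) k) a
      obtain ⟨p', q', hq', rfl⟩ := IsFractionRing.div_surjective (A := MvPolynomial (Fin n) k) b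
      have h1 : algebraMap _ (KK k m) q ≠ 0 :=
        IsLocalization.to_map_ne_zero_of_mem_nonZeroDivisors _ le_rfl hq
      have h2 : algebraMap _ (KK k n) q' ≠ 0 :=
        IsLocalization.to_map_ne_zero_of_mem_nonZeroDivisors _ le_rfl hq'
      refine ⟨algebraMap _ (KK k m) q ⊗ₜ algebraMap _ (KK k n) q', p ⊗ₜ p', ?_, ?_, q ⊗ₜ q', ?_⟩
      · refine IsUnit.of_mul_eq_one
          ((algebraMap _ (KK k m) q)⁻¹ ⊗ₜ (algebraMap _ (KK k n) q')⁻¹) ?_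
        rw [Algebra.TensorProduct.tmul_mul_tmul, mul_inv_cancel₀ h1, mul_inv_cancel₀ h2]; rfl
      · rw [Algebra.TensorProduct.tmul_mul_tmul, mul_div_cancel₀ _ h1, mul_div_cancel₀ _ h2]; rfl
      · rfl
  obtain ⟨u, t', hu, he, -⟩ := key t
  have h3 : (Algebra.TensorProduct.productMap (jL k m n) (jR k m n)).comp ψ =
      (IsScalarTower.toAlgHom k (MvPolynomial (Fin (m + n)) k) (KK k (m + n))).comp
      (Algebra.TensorProduct.productMap
        (MvPolynomial.rename (R := k) (Fin.castAdd n : Fin m → Fin (m + n)))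
        (MvPolynomial.rename (R := k) (Fin.natAdd m : Fin n → Fin (m + n)))) := by
    ext i <;> simp [ψ, jL_alg, jR_alg]
  have h4 := congrArg (Algebra.TensorProduct.productMap (jL k m n) (jR k m n)) he
  rw [map_mul, ht, mul_zero, ← AlgHom.comp_apply, h3, AlgHom.comp_apply] at h4
  have h5 : t' = 0 := by
    apply pol_inj m n
    apply IsFractionRing.injective _ (KK k (m + n))
    rw [map_zero, map_zero]
    exact h4.symm
  rw [h5, map_zero] at he
  exact (hu.mul_right_eq_zero).1 he

end LinAlg

section Faithful

variable {k : Type} [Field k] {I : Type} [Fintype I] [DecidableEq I] (C : CartanDatum k I)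

/-- Faithfulness of the generic representations. -/
def Faith (N : ℕ) : Prop :=
  ∀ r : Alg C N, (∀ μ : Fin N → I, (genD C μ).rho N r = 0) → r = 0

theorem faith_zero : Faith C 0 := by
  intro r hr
  have h1 : r ∈ (⊥ : Subalgebra k (Alg C 0)) := by
    apply alg_top C
    · intro ν
      have := (algData C 0).esum
      rw [Fintype.sum_eq_single ν (fun x hx => absurd (Subsingleton.elim _ _) hx)] at this
      change Ee C ν = 1 at this
      rw [this]; exact one_mem _
    · intro a; exact a.elim0
    · intro l h; omega
  obtain ⟨c, rfl⟩ := Algebra.mem_bot.1 h1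
  have h2 := congrFun (LinearMap.congr_fun (hr Fin.elim0) 1) (Function.Embedding.refl _)
  rw [AlgHom.commutes, Module.algebraMap_end_apply] at h2
  have h3 : algebraMap k (KK k 0) c = 0 := by
    rw [Algebra.algebraMap_eq_smul_one]; exact h2
  rw [(map_eq_zero _).1 h3, map_zero]

theorem comm_pol (P : Polynomial k) (ν : Fin 1 → I) :
    Polynomial.aeval (Xx C (0 : Fin 1)) P * Ee C ν = Ee C ν * Polynomial.aeval (Xx C 0) P := by
  have h : Xx C (0 : Fin 1) * Ee C ν = Ee C ν * Xx C 0 := (algData C 1).xe 0 ν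
  induction P using Polynomial.induction_on with
  | C a => rw [Polynomial.aeval_C]; exact Algebra.commutes _ _
  | add p q hp hq => rw [map_add, add_mul, mul_add, hp, hq]
  | monomial n a ih =>
    rw [pow_succ, ← mul_assoc, map_mul, Polynomial.aeval_X, mul_assoc, h, ← mul_assoc, ih, mul_assoc]

theorem faith_one : Faith C 1 := by
  intro r hr
  let R : Subalgebra k (Alg C 1) :=
    { carrier := {r | ∀ ν, ∃ P, r * Ee C ν = Polynomial.aeval (Xx C 0) P * Ee C ν}
      mul_mem' := fun {a b} ha hb ν => by
        obtain ⟨P, hP⟩ := ha ν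
        obtain ⟨P', hP'⟩ := hb ν
        refine ⟨P * P', ?_⟩
        rw [mul_assoc, hP', comm_pol, ← mul_assoc, hP, mul_assoc, ← comm_pol, map_mul, mul_assoc]
      add_mem' := fun {a b} ha hb ν => by
        obtain ⟨P, hP⟩ := ha ν
        obtain ⟨P', hP'⟩ := hb ν
        exact ⟨P + P', by rw [add_mul, hP, hP', map_add, add_mul]⟩
      algebraMap_mem' := fun c ν => ⟨Polynomial.C c, by rw [Polynomial.aeval_C]⟩ }
  have h1 : r ∈ R := by
    apply alg_top C
    · intro ν ν'
      have := (algData C 1).ee ν ν'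
      change Ee C ν * Ee C ν' = if _ then Ee C ν else _ at this
      by_cases h : ν = ν'
      · subst h
        rw [if_pos rfl] at this
        exact ⟨1, by rw [this, map_one, one_mul]⟩
      · rw [if_neg h] at this
        exact ⟨0, by rw [this, map_zero, zero_mul]⟩
    · intro a ν
      refine ⟨Polynomial.X, ?_⟩
      rw [Polynomial.aeval_X, Subsingleton.elim a 0]
    · intro l h; omega
  rw [sum_e C r]
  refine Finset.sum_eq_zero fun ν _ => ?_
  obtain ⟨P, hP⟩ := h1 ν
  have h2 := congrArg ((genD C ν).rho 1) hP
  rw [map_mul, hr ν, zero_mul, map_mul, ← Polynomial.aeval_algHom_apply, GData.rho_x, GData.rho_e,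
    Polynomial.aeval_algHom_apply, ← map_mul] at h2
  have h3 := congrFun (LinearMap.congr_fun h2 1) (Function.Embedding.refl _)
  rw [GData.opD_apply, Pi.mul_apply] at h3
  have e1 : GData.fe (KK k 1) (genD C ν).μ ν (Function.Embedding.refl (Fin 1)) = 1 := by
    unfold GData.fe
    rw [if_pos]; rfl
  have e2 : (Polynomial.aeval ((genD C ν).fx 0) P : GData.Sp (KK k 1) 1 1)
      (Function.Embedding.refl (Fin 1)) =
      Polynomial.aeval (algebraMap (MvPolynomial (Fin 1) k) (KK k 1) (MvPolynomial.X 0)) P := by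
    have := Polynomial.aeval_algHom_apply
      (Pi.evalAlgHom k (fun _ : (Fin 1 ↪ Fin 1) => KK k 1) (Function.Embedding.refl (Fin 1)))
      ((genD C ν).fx 0) P
    exact this.symm
  rw [e1, e2, Pi.one_apply, mul_one, mul_one, Polynomial.aeval_algebraMap_apply] at h3
  have h4 : Polynomial.aeval (MvPolynomial.X 0 : MvPolynomial (Fin 1) k) P = 0 := by
    apply IsFractionRing.injective _ (KK k 1)
    rw [map_zero]
    exact h3.symm
  have h5 : P = 0 := by
    by_contra hne
    exact MvPolynomial.transcendental_X k (0 : Fin 1) ⟨P, hne, h4⟩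
  rw [hP, h5, map_zero, zero_mul]

end Faithful

end KLR


namespace KLR

open scoped TensorProduct

section Main

variable {k : Type} [Field k] {I : Type} [Fintype I] [DecidableEq I] (C : CartanDatum k I)

/-- matrix coefficient -/
noncomputable def coef {N : ℕ} (x : (Fin N → I) × (Fin N ↪ Fin N) × (Fin N ↪ Fin N)) :
    Alg C N →ₗ[k] KK k N where
  toFun r := (genD C x.1).rho N r (Pi.single x.2.1 1) x.2.2
  map_add' a b := by rw [map_add]; rfl
  map_smul' c a := by rw [map_smul]; rfl

theorem coef_inj {N : ℕ} (hF : Faith C N) (r : Alg C N) (h : ∀ x, coef C x r = 0) : r = 0 := by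
  apply hF
  intro μ
  refine LinearMap.ext fun f => ?_
  ext σ
  rw [GData.rho_single]
  refine Finset.sum_eq_zero fun π _ => ?_
  have := h (μ, π, σ)
  change (genD C μ).rho N r (Pi.single π 1) σ = 0 at this
  rw [this, mul_zero]

variable {m n : ℕ}

theorem loc_yL (μ : Fin (m + n) → I) (p) :
    ((genD C (μ ∘ Fin.castAdd n)).map (jL k m n)).y p = (genD C μ).y (Fin.castAdd n p) := by
  rw [GData.map_y]
  change jL k m n (algebraMap _ _ (MvPolynomial.X p)) = _
  rw [jL_alg, MvPolynomial.rename_X]; rfl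

theorem loc_yR (μ : Fin (m + n) → I) (p) :
    ((genD C (μ ∘ Fin.natAdd m)).map (jR k m n)).y p = (genD C μ).y (Fin.natAdd m p) := by
  rw [GData.map_y]
  change jR k m n (algebraMap _ _ (MvPolynomial.X p)) = _
  rw [jR_alg, MvPolynomial.rename_X]; rfl

theorem gen_loc (μ : Fin (m + n) → I) (s) (f : GData.Sp (KK k (m + n)) (m + n) (m + n))
    (hf : ∀ α β, f (bs α β) = 0) (α : Fin m ↪ Fin m) (β : Fin n ↪ Fin n) :
    (genD C μ).rho (m + n) (iT C m n s) f (bs α β) = 0 :=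
  rho_iT_zero (loc_yL C μ) (fun _ => rfl) (loc_yR C μ) (fun _ => rfl) s f hf α β

theorem map_coef {N M : ℕ} (φ : KK k N →ₐ[k] KK k M) (μ : Fin N → I) (r : Alg C N) (π σ) :
    ((genD C μ).map φ).rho N r (Pi.single π 1) σ = φ (coef C (μ, π, σ) r) := by
  have := (genD C μ).rho_map φ r (Pi.single π 1) σ
  have e : (fun τ => φ ((Pi.single π 1 : GData.Sp (KK k N) N N) τ)) = Pi.single π 1 := by
    ext τ
    by_cases h : τ = π
    · subst h; simp
    · rw [Pi.single_eq_of_ne h, Pi.single_eq_of_ne h, map_zero]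
  rw [e] at this
  exact this

theorem gen_coef (μ : Fin (m + n) → I) (s) (α π : Fin m ↪ Fin m) (β π' : Fin n ↪ Fin n) :
    (genD C μ).rho (m + n) (iT C m n s) (Pi.single (bs π π') 1) (bs α β) =
      Algebra.TensorProduct.productMap (jL k m n) (jR k m n)
        (TensorProduct.map (coef C (μ ∘ Fin.castAdd n, π, α))
          (coef C (μ ∘ Fin.natAdd m, π', β)) s) := by
  induction s with
  | zero => simp
  | add x y hx hy =>
    rw [map_add, map_add, LinearMap.add_apply, Pi.add_apply, hx, hy, map_add, map_add]
  | tmul a b =>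
    rw [rho_iT_single (loc_yL C μ) (fun _ => rfl) (loc_yR C μ) (fun _ => rfl), map_coef, map_coef,
      TensorProduct.map_tmul, Algebra.TensorProduct.productMap_apply_tmul]

/-- faithfulness of the tensor product on blocks -/
def SFaith (m n : ℕ) : Prop :=
  ∀ s : Alg C m ⊗[k] Alg C n, (∀ (μ : Fin (m + n) → I) h α β,
    (genD C μ).rho (m + n) (iT C m n s) h (bs α β) = 0) → s = 0

theorem sfaith (hm : Faith C m) (hn : Faith C n) : SFaith C m n := by
  intro s hs
  refine joint_both (coef C) (coef_inj C hm) (coef C) (coef_inj C hn) s ?_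
  rintro ⟨μ, π, α⟩ ⟨μ', π', β⟩
  apply frac_inj m n
  rw [map_zero]
  have := gen_coef C (Fin.append μ μ') s α π β π'
  rw [hs] at this
  have e1 : Fin.append μ μ' ∘ Fin.castAdd n = μ := by ext a; simp
  have e2 : Fin.append μ μ' ∘ Fin.natAdd m = μ' := by ext a; simp
  rw [e1, e2] at this
  exact this.symm

/-- The set of shuffles. -/
abbrev Shf (m n : ℕ) : Type := {w : Fin (m + n) → Bool // IsSh m n w}

noncomputable instance (m n : ℕ) : Fintype (Shf m n) := Fintype.ofFinite _

theorem main_step (hS : SFaith C m n) (s : Shf m n → Alg C m ⊗[k] Alg C n)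
    (H : ∀ μ : Fin (m + n) → I,
      (genD C μ).rho (m + n) (∑ w, iT C m n (s w) * tw C w.1) = 0) (w : Shf m n) : s w = 0 := by
  classical
  by_contra hw
  obtain ⟨v, hv, hmax⟩ := Finset.exists_max_image (Finset.univ.filter fun v => s v ≠ 0)
    (fun v => wt v.1) ⟨w, by simpa using hw⟩
  simp only [Finset.mem_filter, Finset.mem_univ, true_and] at hv hmax
  apply hv
  apply hS
  intro μ h α β
  set G := genD C μ with hG
  obtain ⟨p, hp, hc⟩ := tri G v.1 v.2
  choose! c hc0 hc using hc
  let f : GData.Sp (KK k (m + n)) (m + n) (m + n) := fun π =>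
    if w0 m n ∘ π = v.1 then
      (c (p.symm.toEmbedding.trans π))⁻¹ * h (p.symm.toEmbedding.trans π) else 0
  have h1 : ∀ α β, G.rho (m + n) (tw C v.1) f (bs α β) = h (bs α β) := by
    intro α β
    rw [hc _ (w0_bs α β)]
    · have e1 : w0 m n ∘ (p.toEmbedding.trans (bs α β)) = v.1 := by
        rw [← hp]
        ext z
        exact congrFun (w0_bs α β) (p z)
      have e2 : p.symm.toEmbedding.trans (p.toEmbedding.trans (bs α β)) = bs α β := by
        ext z; simp
      simp only [f]
      rw [if_pos e1, e2, ← mul_assoc, mul_inv_cancel₀ (hc0 _ (w0_bs α β)), one_mul]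
    · intro π hπ
      simp only [f]
      rw [if_neg]
      intro e
      rw [e] at hπ; omega
  have h2 : ∀ v' : Shf m n, v' ≠ v → s v' ≠ 0 → ∀ α β,
      G.rho (m + n) (tw C v'.1) f (bs α β) = 0 := by
    intro v' hne hs' α β
    obtain ⟨p', hp', hc'⟩ := tri G v'.1 v'.2
    obtain ⟨c', -, hc'⟩ := hc' _ (w0_bs α β)
    rw [hc']
    · have e1 : w0 m n ∘ (p'.toEmbedding.trans (bs α β)) = v'.1 := by
        rw [← hp']
        ext z
        exact congrFun (w0_bs α β) (p' z)
      simp only [f]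
      rw [if_neg, mul_zero]
      rw [e1]
      exact fun e => hne (Subtype.ext e)
    · intro π hπ
      simp only [f]
      rw [if_neg]
      intro e
      have := hmax v' hs'
      rw [e] at hπ; omega
  have h3 := congrFun (LinearMap.congr_fun (H μ) f) (bs α β)
  rw [map_sum, LinearMap.sum_apply, Finset.sum_apply, Finset.sum_eq_single v] at h3
  · rw [map_mul, Module.End.mul_apply] at h3
    have h4 := gen_loc C μ (s v) (h - G.rho (m + n) (tw C v.1) f)
      (fun α β => by rw [Pi.sub_apply, h1, sub_self]) α β
    rw [map_sub, Pi.sub_apply, sub_eq_zero] at h4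
    rw [hG, h4]
    exact h3
  · intro v' _ hne
    by_cases hs' : s v' = 0
    · rw [hs', map_zero, zero_mul, map_zero]; rfl
    · rw [map_mul, Module.End.mul_apply]
      exact gen_loc C μ _ _ (h2 v' hne hs') α β
  · simp

theorem exists_sum (r : Alg C (m + n)) :
    ∃ s : Shf m n → Alg C m ⊗[k] Alg C n, r = ∑ w, iT C m n (s w) * tw C w.1 := by
  classical
  have hr : r ∈ Submodule.span k {z | ∃ s w, IsSh m n w ∧ z = iT C m n s * tw C w} := by
    rw [span_tw]; trivial
  induction hr using Submodule.span_induction with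
  | mem x hx =>
    obtain ⟨s, w, hw, rfl⟩ := hx
    refine ⟨Pi.single ⟨w, hw⟩ s, ?_⟩
    rw [Finset.sum_eq_single ⟨w, hw⟩]
    · rw [Pi.single_eq_same]
    · intro b _ hb
      rw [Pi.single_eq_of_ne hb, map_zero, zero_mul]
    · simp
  | zero => exact ⟨0, by simp⟩
  | add x y _ _ hx hy =>
    obtain ⟨s, hs⟩ := hx
    obtain ⟨s', hs'⟩ := hy
    refine ⟨s + s', ?_⟩
    rw [hs, hs', ← Finset.sum_add_distrib]
    simp only [Pi.add_apply, map_add, add_mul]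
  | smul c x _ hx =>
    obtain ⟨s, hs⟩ := hx
    refine ⟨c • s, ?_⟩
    rw [hs, Finset.smul_sum]
    simp only [Pi.smul_apply, map_smul, smul_mul_assoc]

theorem faith_add (hm : Faith C m) (hn : Faith C n) : Faith C (m + n) := by
  intro r hr
  obtain ⟨s, rfl⟩ := exists_sum C r
  refine Finset.sum_eq_zero fun w _ => ?_
  rw [main_step C (sfaith C hm hn) s hr w, map_zero, zero_mul]

theorem faith (N : ℕ) : Faith C N := by
  induction N with
  | zero => exact faith_zero C
  | succ N ih => exact faith_add C ih (faith_one C)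

theorem lin_indep (s : Shf m n → Alg C m ⊗[k] Alg C n)
    (H : ∑ w, iT C m n (s w) * tw C w.1 = 0) (w : Shf m n) : s w = 0 :=
  main_step C (sfaith C (faith C m) (faith C n)) s (fun μ => by rw [H, map_zero]) w

theorem iT_injective : Function.Injective (iT C m n) := by
  classical
  rw [injective_iff_map_eq_zero]
  intro z hz
  have := lin_indep C (fun w => if w = ⟨w0 m n, IsSh.zero m n⟩ then z else 0) (by
    refine Finset.sum_eq_zero fun w _ => ?_
    split_ifs
    · rw [hz, zero_mul]
    · rw [map_zero, zero_mul]) ⟨w0 m n, IsSh.zero m n⟩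
  rwa [if_pos rfl] at this

theorem free_left :
    letI : Module (Alg C m ⊗[k] Alg C n) (Alg C (m + n)) :=
      Module.compHom _ (iT C m n).toRingHom
    Module.Free (Alg C m ⊗[k] Alg C n) (Alg C (m + n)) := by
  let inst : Module (Alg C m ⊗[k] Alg C n) (Alg C (m + n)) :=
    Module.compHom _ (iT C m n).toRingHom
  have hsm : ∀ (s : Alg C m ⊗[k] Alg C n) (r : Alg C (m + n)), s • r = iT C m n s * r :=
    fun _ _ => rfl
  refine Module.Free.of_basis (Module.Basis.mk (v := fun w : Shf m n => tw C w.1) ?_ ?_)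
  · refine (Fintype.linearIndependent_iff (ι := Shf m n) (R := Alg C m ⊗[k] Alg C n) (M := Alg C (m + n))).2 ?_
    intro s hs
    exact lin_indep C s hs
  · intro r _
    obtain ⟨s, rfl⟩ := exists_sum C r
    exact Submodule.sum_mem _ fun w _ => by
      rw [← hsm]
      exact Submodule.smul_mem _ _ (Submodule.subset_span ⟨w, rfl⟩)

theorem free_right :
    letI : Module (Alg C m ⊗[k] Alg C n)ᵐᵒᵖ (Alg C (m + n)) :=
      Module.compHom _ (RingHom.op (iT C m n).toRingHom : _ →+* (Alg C (m + n))ᵐᵒᵖ)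
    Module.Free (Alg C m ⊗[k] Alg C n)ᵐᵒᵖ (Alg C (m + n)) := by
  let inst : Module (Alg C m ⊗[k] Alg C n)ᵐᵒᵖ (Alg C (m + n)) :=
    Module.compHom _ (RingHom.op (iT C m n).toRingHom : _ →+* (Alg C (m + n))ᵐᵒᵖ)
  have hsm : ∀ (s : (Alg C m ⊗[k] Alg C n)ᵐᵒᵖ) (r : Alg C (m + n)),
      s • r = r * iT C m n s.unop := fun _ _ => rfl
  let θ := TensorProduct.congr (psiE C m) (psiE C n)
  have hθ : ∀ (s : Alg C m ⊗[k] Alg C n) w,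
      psiE C (m + n) (iT C m n s * tw C w) = psiE C (m + n) (tw C w) * iT C m n (θ s) := by
    intro s w
    rw [psiE_mul, psiE_iT]
  refine Module.Free.of_basis
    (Module.Basis.mk (v := fun w : Shf m n => psiE C (m + n) (tw C w.1)) ?_ ?_)
  · refine (Fintype.linearIndependent_iff (ι := Shf m n) (R := (Alg C m ⊗[k] Alg C n)ᵐᵒᵖ)
      (M := Alg C (m + n))).2 ?_
    intro s hs w
    have h := lin_indep C (fun w => θ.symm (s w).unop) (by
      apply (psiE C (m + n)).injective
      rw [map_zero, map_sum, ← hs]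
      refine Finset.sum_congr rfl fun w _ => ?_
      rw [hθ, LinearEquiv.apply_symm_apply, hsm]) w
    have h' := (LinearEquiv.map_eq_zero_iff _).1 h
    exact MulOpposite.unop_injective h'
  · intro r _
    obtain ⟨s, hs⟩ := exists_sum C ((psiE C (m + n)).symm r)
    have : r = ∑ w, psiE C (m + n) (tw C w.1) * iT C m n (θ (s w)) := by
      rw [← (psiE C (m + n)).apply_symm_apply r, hs, map_sum]
      exact Finset.sum_congr rfl fun w _ => hθ _ _
    rw [this]
    exact Submodule.sum_mem _ fun w _ => by
      rw [← MulOpposite.unop_op (θ (s w)), ← hsm]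
      exact Submodule.smul_mem _ _ (Submodule.subset_span ⟨w, rfl⟩)

end Main

end KLR


open KLR in
open scoped TensorProduct in
/-- There is a well-defined algebra homomorphism `ι : R(m) ⊗ R(n) → R(m+n)` given by
`e(ν) ⊗ e(ν′) ↦ e(ν∗ν′)`, `x_a ⊗ 1 ↦ x_a`, `1 ⊗ x_a ↦ x_{m+a}`, `τ_l ⊗ 1 ↦ τ_l`,
`1 ⊗ τ_l ↦ τ_{m+l}`; moreover `R(m+n)` is free both as a left and as a right module
over `R(m) ⊗ R(n)` via `ι` (in particular `ι` is injective). -/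
theorem klr_tensor_embedding {k : Type} [Field k] {I : Type} [Fintype I] [DecidableEq I]
    (C : CartanDatum k I) (m n : ℕ) :
    ∃ ι : (Alg C m ⊗[k] Alg C n) →ₐ[k] Alg C (m + n),
      (∀ (ν : Fin m → I) (ν' : Fin n → I),
        ι (Ee C ν ⊗ₜ[k] Ee C ν') = Ee C (Fin.append ν ν')) ∧
      (∀ a : Fin m, ι (Xx C a ⊗ₜ[k] 1) = Xx C (Fin.castAdd n a)) ∧
      (∀ a : Fin n, ι ((1 : Alg C m) ⊗ₜ[k] Xx C a) = Xx C (Fin.natAdd m a)) ∧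
      (∀ (l : ℕ) (h : l + 1 < m),
        ι (Tt C l h ⊗ₜ[k] 1) = Tt C l (by omega)) ∧
      (∀ (l : ℕ) (h : l + 1 < n),
        ι ((1 : Alg C m) ⊗ₜ[k] Tt C l h) = Tt C (m + l) (by omega)) ∧
      Function.Injective ⇑ι ∧
      (letI : Module (Alg C m ⊗[k] Alg C n) (Alg C (m + n)) :=
          Module.compHom _ ι.toRingHom;
        Module.Free (Alg C m ⊗[k] Alg C n) (Alg C (m + n))) ∧
      (letI : Module (Alg C m ⊗[k] Alg C n)ᵐᵒᵖ (Alg C (m + n)) :=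
          Module.compHom _ (RingHom.op ι.toRingHom : _ →+* (Alg C (m + n))ᵐᵒᵖ);
        Module.Free (Alg C m ⊗[k] Alg C n)ᵐᵒᵖ (Alg C (m + n))) := by
  refine ⟨iT C m n, fun ν ν' => iT_e _ _ ν ν', fun a => ?_, fun a => ?_, fun l h => ?_, fun l h => ?_,
    iT_injective C, free_left C, free_right C⟩
  · rw [iT_left, iL_x]
  · rw [iT_right, iR_x]
  · rw [iT_left, iL_t]
  · rw [iT_right, iR_t]
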